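/- arXiv:1807.04618 — 16 statements merged into one kernel-verified Lean document; each statement's English description precedes it below -/
import Mathlib

section
/- For every complete listening schedule L there exists a configuration κ ∈ K_BC with discovery time T_κ(L) ≥ max(B)·|C| − 1; hence no complete schedule finishes the discovery of all configurations in fewer than max(B)·|C| time slots. -/
open scoped Classical

/-- A listening schedule over channel set `C`: a set of (channel, time-slot) pairs
such that all scanned channels belong to `C` and at most one channel is scanned
per time slot. -/
def IsSchedule (C : Finset ℕ) (L : Set (ℕ × ℕ)) : Prop :=
  (∀ p ∈ L, p.1 ∈ C) ∧ ∀ c c' t : ℕ, (c, t) ∈ L → (c', t) ∈ L → c = c'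

/-- Configuration `(c, b, δ)` is discovered at time slot `t` by the schedule `L`. -/
def DiscoveredAt (L : Set (ℕ × ℕ)) (c b δ t : ℕ) : Prop :=
  (c, t) ∈ L ∧ t % b = δ

/-- The discovery time `T_κ(L)` of configuration `κ = (c, b, δ)`: the least time slot
at which it is discovered (junk value `0` if it is never discovered). -/
noncomputable def discTime (L : Set (ℕ × ℕ)) (c b δ : ℕ) : ℕ :=
  sInf {t | DiscoveredAt L c b δ t}

/-- A schedule is complete if every configuration in `K_BC` is discovered at some slot. -/
def Complete (C B : Finset ℕ) (L : Set (ℕ × ℕ)) : Prop :=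
  ∀ c ∈ C, ∀ b ∈ B, ∀ δ < b, ∃ t, DiscoveredAt L c b δ t

/-- The set of all configurations `K_BC`, as a finite set of triples `(c, b, δ)`. -/
def KBC (C B : Finset ℕ) : Finset (ℕ × ℕ × ℕ) :=
  (C ×ˢ B ×ˢ Finset.range (B.sup id)).filter fun κ => κ.2.2 < κ.2.1

/-- The weight `P_κ = 1/(b·|B|·|C|)` of a configuration with beacon period `b`. -/
noncomputable def weight (C B : Finset ℕ) (b : ℕ) : ℝ :=
  (1 : ℝ) / ((b : ℝ) * (B.card : ℝ) * (C.card : ℝ))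

/-- Total weight of configurations discovered by `L` at some slot `≤ t` (the NDoT curve). -/
noncomputable def discSum (C B : Finset ℕ) (L : Set (ℕ × ℕ)) (t : ℕ) : ℝ :=
  ∑ κ ∈ (KBC C B).filter (fun κ => ∃ t' ≤ t, DiscoveredAt L κ.1 κ.2.1 κ.2.2 t'),
    weight C B κ.2.1

/-- The mean discovery time `MDT(L) = Σ_{κ ∈ K_BC} P_κ · T_κ(L)`. -/
noncomputable def MDT (C B : Finset ℕ) (L : Set (ℕ × ℕ)) : ℝ :=
  ∑ κ ∈ KBC C B, weight C B κ.2.1 * (discTime L κ.1 κ.2.1 κ.2.2 : ℝ)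

/-- A schedule is recursive if it is complete and, for every `b ∈ B`, every
configuration with beacon period `b` has discovery time at most `b·|C| - 1`. -/
def Recursive (C B : Finset ℕ) (L : Set (ℕ × ℕ)) : Prop :=
  Complete C B L ∧
  ∀ c ∈ C, ∀ b ∈ B, ∀ δ < b, discTime L c b δ ≤ b * C.card - 1

/-- `D(c,t)`: the expected number of new discoveries when scanning channel `c` at slot `t`,
i.e. the sum of weights of configurations `(c, b, t mod b)`, `b ∈ B`, not yet
discovered by `L` before slot `t`. -/
noncomputable def gain (C B : Finset ℕ) (L : Set (ℕ × ℕ)) (c t : ℕ) : ℝ :=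
  ∑ b ∈ B.filter (fun b => ¬ ∃ t' < t, DiscoveredAt L c b (t % b) t'),
    weight C B b

/-- A schedule is greedy if, whenever some channel has positive expected gain at slot `t`,
it scans a channel maximizing the expected gain at slot `t`. -/
def Greedy (C B : Finset ℕ) (L : Set (ℕ × ℕ)) : Prop :=
  IsSchedule C L ∧
  ∀ t : ℕ, (∃ c ∈ C, 0 < gain C B L c t) →
    ∃ c ∈ C, (c, t) ∈ L ∧ ∀ c' ∈ C, gain C B L c' t ≤ gain C B L c t

/-- every complete listening schedule has a configuration with
discovery time at least `max(B)·|C| − 1`. -/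
theorem stmt1 (C B : Finset ℕ) (hC : C.Nonempty) (hB : B.Nonempty)
    (hBpos : ∀ b ∈ B, 0 < b)
    (L : Set (ℕ × ℕ)) (hL : IsSchedule C L) (hcomp : Complete C B L) :
    ∃ c ∈ C, ∃ b ∈ B, ∃ δ < b, B.max' hB * C.card - 1 ≤ discTime L c b δ := by
  by_contra! h
  have hm : B.max' hB ∈ B := B.max'_mem hB
  set m := B.max' hB with hmdef
  have hspec : ∀ p ∈ C ×ˢ Finset.range m,
      DiscoveredAt L p.1 m p.2 (discTime L p.1 m p.2) := by
    intro p hp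
    rw [Finset.mem_product, Finset.mem_range] at hp
    exact Nat.sInf_mem (s := {t | DiscoveredAt L p.1 m p.2 t}) (hcomp p.1 hp.1 m hm p.2 hp.2)
  have hcard : (C ×ˢ Finset.range m).card ≤ (Finset.range (m * C.card - 1)).card := by
    apply Finset.card_le_card_of_injOn (fun p => discTime L p.1 m p.2)
    · intro p hp
      have hp' := Finset.mem_coe.1 hp
      rw [Finset.mem_product, Finset.mem_range] at hp'
      exact Finset.mem_coe.2 (Finset.mem_range.2 (h p.1 hp'.1 m hm p.2 hp'.2))
    · intro p hp q hq hpq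
      have h1 := hspec p (Finset.mem_coe.1 hp)
      have h2 := hspec q (Finset.mem_coe.1 hq)
      dsimp only at hpq
      rw [← hpq] at h2
      exact Prod.ext (hL.2 _ _ _ h1.1 h2.1) (h1.2.symm.trans h2.2)
  rw [Finset.card_product, Finset.card_range, Finset.card_range, mul_comm] at hcard
  have hpos : 0 < m * C.card := Nat.mul_pos (hBpos m hm) hC.card_pos
  omega
end

section
/- Every WDT-optimal schedule has no idle time slots during the discovery: if L is WDT-optimal, then for every time slot t ∈ {0, …, max(B)·|C| − 1} there exists a channel c ∈ C with (c,t) ∈ L. -/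
open scoped Classical

/-- a WDT-optimal schedule has no idle time slots: every slot
`t ∈ {0, …, max(B)·|C| − 1}` scans some channel. -/
theorem stmt2 (C B : Finset ℕ) (hC : C.Nonempty) (hB : B.Nonempty)
    (hBpos : ∀ b ∈ B, 0 < b)
    (L : Set (ℕ × ℕ)) (hL : IsSchedule C L) (hcomp : Complete C B L)
    (hwdt : ∀ c ∈ C, ∀ b ∈ B, ∀ δ < b,
      discTime L c b δ ≤ B.max' hB * C.card - 1) :
    ∀ t ≤ B.max' hB * C.card - 1, ∃ c ∈ C, (c, t) ∈ L := by
  intro t ht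
  have hmB := B.max'_mem hB
  have hm := hBpos _ hmB
  generalize B.max' hB = m at *
  have hpos : 0 < m * C.card := Nat.mul_pos hm hC.card_pos
  have hd : ∀ c ∈ C, ∀ δ < m, DiscoveredAt L c m δ (discTime L c m δ) := by
    intro c hc δ hδ
    exact Nat.sInf_mem (hcomp c hc m hmB δ hδ)
  have hsurj := Finset.surjOn_of_injOn_of_card_le (s := C ×ˢ Finset.range m)
    (t := Finset.range (m * C.card)) (fun p => discTime L p.1 m p.2)
    (by
      rintro ⟨c, δ⟩ hp
      simp only [Finset.coe_product, Set.mem_prod, Finset.mem_coe, Finset.mem_range] at hp ⊢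
      have := hwdt c hp.1 m hmB δ hp.2
      omega)
    (by
      rintro ⟨c, δ⟩ hp ⟨c', δ'⟩ hp' h
      simp only [Finset.coe_product, Set.mem_prod, Finset.mem_coe, Finset.mem_range] at hp hp' h
      have h1 := hd c hp.1 δ hp.2
      have h2 := hd c' hp'.1 δ' hp'.2
      rw [← h] at h2
      exact Prod.ext (hL.2 _ _ _ h1.1 h2.1) (h1.2.symm.trans h2.2))
    (by simp [mul_comm])
  obtain ⟨⟨c, δ⟩, hp, h⟩ := hsurj (show t ∈ _ by
    simp only [Finset.mem_coe, Finset.mem_range]; omega)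
  simp only [Finset.coe_product, Set.mem_prod, Finset.mem_coe, Finset.mem_range] at hp h
  exact ⟨c, hp.1, h ▸ (hd c hp.1 δ hp.2).1⟩
end

section
/- Every recursive schedule is NDoT-optimal and MDT-optimal: if L is recursive, then for every listening schedule L' and every t ∈ ℕ, Σ_{κ ∈ K_BC discovered by L at some slot ≤ t} P_κ ≥ Σ_{κ ∈ K_BC discovered by L' at some slot ≤ t} P_κ, and consequently L minimizes MDT among all complete schedules. -/
open scoped Classical

theorem mem_KBC_aux {C B : Finset ℕ} {κ : ℕ × ℕ × ℕ} :
    κ ∈ KBC C B ↔ κ.1 ∈ C ∧ κ.2.1 ∈ B ∧ κ.2.2 < κ.2.1 := by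
  unfold KBC
  simp only [Finset.mem_filter, Finset.mem_product, Finset.mem_range]
  constructor
  · rintro ⟨⟨h1, h2, -⟩, h3⟩
    exact ⟨h1, h2, h3⟩
  · rintro ⟨h1, h2, h3⟩
    exact ⟨⟨h1, h2, lt_of_lt_of_le h3 (Finset.le_sup (f := id) h2)⟩, h3⟩

noncomputable def fibF (C B : Finset ℕ) (L : Set (ℕ × ℕ)) (t b : ℕ) : Finset (ℕ × ℕ × ℕ) :=
  ((KBC C B).filter
    (fun κ => ∃ t' ≤ t, DiscoveredAt L κ.1 κ.2.1 κ.2.2 t')).filter (fun κ => κ.2.1 = b)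

theorem discSum_eq_aux (C B : Finset ℕ) (L : Set (ℕ × ℕ)) (t : ℕ) :
    discSum C B L t = ∑ b ∈ B, ((fibF C B L t b).card : ℝ) * weight C B b := by
  unfold discSum
  rw [← Finset.sum_fiberwise_of_maps_to (t := B) (g := fun κ : ℕ × ℕ × ℕ => κ.2.1)]
  · refine Finset.sum_congr rfl fun b hb => ?_
    rw [← nsmul_eq_mul, ← Finset.sum_const]
    refine Finset.sum_congr rfl fun κ hκ => ?_
    rw [(Finset.mem_filter.1 hκ).2]
  · intro κ hκ
    exact (mem_KBC_aux.1 (Finset.mem_filter.1 hκ).1).2.1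

noncomputable def slotF (L : Set (ℕ × ℕ)) (b t : ℕ) : ℕ × ℕ × ℕ :=
  (if h : ∃ c, (c, t) ∈ L then h.choose else 0, b, t % b)

theorem slotF_eq {C : Finset ℕ} {L : Set (ℕ × ℕ)} (hL : IsSchedule C L) {c b δ t : ℕ}
    (h : DiscoveredAt L c b δ t) : slotF L b t = (c, b, δ) := by
  have hex : ∃ c, (c, t) ∈ L := ⟨c, h.1⟩
  unfold slotF
  rw [dif_pos hex, h.2, hL.2 _ _ _ hex.choose_spec h.1]

theorem fib_le {C : Finset ℕ} (B : Finset ℕ) {L : Set (ℕ × ℕ)} (hL : IsSchedule C L) (t b : ℕ) :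
    (fibF C B L t b).card ≤ t + 1 := by
  have : fibF C B L t b ⊆ (Finset.range (t + 1)).image (slotF L b) := by
    rintro ⟨c, b', δ⟩ h
    simp only [fibF, Finset.mem_filter] at h
    obtain ⟨⟨-, t', ht', hd⟩, rfl⟩ := h
    exact Finset.mem_image.2 ⟨t', Finset.mem_range.2 (by omega), slotF_eq hL hd⟩
  exact (Finset.card_le_card this).trans (Finset.card_image_le.trans (by simp))

theorem total_card (C B : Finset ℕ) {b : ℕ} (hb : b ∈ B) :
    ((KBC C B).filter (fun κ => κ.2.1 = b)).card = b * C.card := by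
  have : (KBC C B).filter (fun κ => κ.2.1 = b) = C ×ˢ ({b} ×ˢ Finset.range b) := by
    ext ⟨c, b', δ⟩
    simp only [Finset.mem_filter, mem_KBC_aux, Finset.mem_product, Finset.mem_singleton,
      Finset.mem_range]
    constructor
    · rintro ⟨⟨h1, h2, h3⟩, rfl⟩
      exact ⟨h1, rfl, h3⟩
    · rintro ⟨h1, rfl, h3⟩
      exact ⟨⟨h1, hb, h3⟩, rfl⟩
  rw [this]
  simp [mul_comm]

theorem fib_le_total (C B : Finset ℕ) (L : Set (ℕ × ℕ)) (t : ℕ) {b : ℕ} (hb : b ∈ B) :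
    (fibF C B L t b).card ≤ b * C.card := by
  rw [← total_card C B hb]
  apply Finset.card_le_card
  intro κ h
  simp only [fibF, Finset.mem_filter] at h ⊢
  exact ⟨h.1.1, h.2⟩

theorem disc_spec {C B : Finset ℕ} {L : Set (ℕ × ℕ)} (h : Complete C B L)
    {κ : ℕ × ℕ × ℕ} (hκ : κ ∈ KBC C B) :
    DiscoveredAt L κ.1 κ.2.1 κ.2.2 (discTime L κ.1 κ.2.1 κ.2.2) := by
  obtain ⟨h1, h2, h3⟩ := mem_KBC_aux.1 hκ
  exact Nat.sInf_mem (s := {t | DiscoveredAt L κ.1 κ.2.1 κ.2.2 t}) (h _ h1 _ h2 _ h3)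

theorem fib_ge {C B : Finset ℕ} (hC : C.Nonempty) (hBpos : ∀ b ∈ B, 0 < b)
    {L : Set (ℕ × ℕ)} (hL : IsSchedule C L) (hrec : Recursive C B L) (t : ℕ)
    {b : ℕ} (hb : b ∈ B) :
    min (t + 1) (b * C.card) ≤ (fibF C B L t b).card := by
  have hpos : 0 < b * C.card := Nat.mul_pos (hBpos b hb) hC.card_pos
  have : (KBC C B).filter (fun κ => κ.2.1 = b) ⊆
      fibF C B L t b ∪ (Finset.Ico (t + 1) (b * C.card)).image (slotF L b) := by
    intro κ h
    obtain ⟨hκ, rfl⟩ := Finset.mem_filter.1 h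
    have hs := disc_spec hrec.1 hκ
    obtain ⟨h1, h2, h3⟩ := mem_KBC_aux.1 hκ
    have hle := hrec.2 _ h1 _ h2 _ h3
    by_cases hc : discTime L κ.1 κ.2.1 κ.2.2 ≤ t
    · exact Finset.mem_union_left _
        (Finset.mem_filter.2 ⟨Finset.mem_filter.2 ⟨hκ, _, hc, hs⟩, rfl⟩)
    · refine Finset.mem_union_right _ (Finset.mem_image.2 ⟨_, Finset.mem_Ico.2 ⟨?_, ?_⟩,
        slotF_eq hL hs⟩) <;> omega
  have h1 := (Finset.card_le_card this).trans (Finset.card_union_le _ _)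
  have h2 := Finset.card_image_le (s := Finset.Ico (t + 1) (b * C.card)) (f := slotF L b)
  rw [total_card C B hb] at h1
  rw [Nat.card_Ico] at h2
  omega

theorem weight_nonneg_aux (C B : Finset ℕ) (b : ℕ) : 0 ≤ weight C B b := by
  unfold weight
  positivity

theorem MDT_eq_aux {C B : Finset ℕ} {L : Set (ℕ × ℕ)} (h : Complete C B L) (M : ℕ)
    (hM : ∀ κ ∈ KBC C B, discTime L κ.1 κ.2.1 κ.2.2 ≤ M) :
    MDT C B L = ∑ t ∈ Finset.range M,
      ((∑ κ ∈ KBC C B, weight C B κ.2.1) - discSum C B L t) := by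
  unfold MDT discSum
  simp only [Finset.sum_filter, ← Finset.sum_sub_distrib]
  rw [Finset.sum_comm]
  refine Finset.sum_congr rfl fun κ hκ => ?_
  have hs := disc_spec h hκ
  have hT := hM κ hκ
  have key : ∀ t, (∃ t' ≤ t, DiscoveredAt L κ.1 κ.2.1 κ.2.2 t') ↔
      discTime L κ.1 κ.2.1 κ.2.2 ≤ t := by
    intro t
    constructor
    · rintro ⟨t', h1, h2⟩
      exact (Nat.sInf_le (s := {t | DiscoveredAt L κ.1 κ.2.1 κ.2.2 t}) h2).trans h1
    · intro h1
      exact ⟨_, h1, hs⟩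
  simp only [key]
  generalize discTime L κ.1 κ.2.1 κ.2.2 = T at *
  have : ∀ t ∈ Finset.range M, weight C B κ.2.1 - (if T ≤ t then weight C B κ.2.1 else 0)
      = if t < T then weight C B κ.2.1 else 0 := by
    intro t _
    by_cases hc : T ≤ t
    · simp [hc]
    · simp [hc, not_le.1 hc]
  rw [Finset.sum_congr rfl this, ← Finset.sum_filter]
  have h2 : (Finset.range M).filter (fun t => t < T) = Finset.range T := by
    ext t
    simp only [Finset.mem_filter, Finset.mem_range]
    omega
  rw [h2]
  simp [mul_comm]

/-- a recursive schedule is NDoT-optimal (it pointwise maximizes the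
weighted number of discoveries until every slot `t`) and consequently MDT-optimal. -/
theorem stmt3 (C B : Finset ℕ) (hC : C.Nonempty) (hB : B.Nonempty)
    (hBpos : ∀ b ∈ B, 0 < b)
    (L : Set (ℕ × ℕ)) (hL : IsSchedule C L) (hrec : Recursive C B L) :
    (∀ L' : Set (ℕ × ℕ), IsSchedule C L' →
      ∀ t : ℕ, discSum C B L' t ≤ discSum C B L t) ∧
    (∀ L' : Set (ℕ × ℕ), IsSchedule C L' → Complete C B L' →
      MDT C B L ≤ MDT C B L') := by
  have main : ∀ L' : Set (ℕ × ℕ), IsSchedule C L' →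
      ∀ t : ℕ, discSum C B L' t ≤ discSum C B L t := by
    intro L' hL' t
    rw [discSum_eq_aux, discSum_eq_aux]
    refine Finset.sum_le_sum fun b hb => ?_
    refine mul_le_mul_of_nonneg_right ?_ (weight_nonneg_aux C B b)
    exact_mod_cast (le_min (fib_le B hL' t b) (fib_le_total C B L' t hb)).trans
      (fib_ge hC hBpos hL hrec t hb)
  refine ⟨main, fun L' hL' hc' => ?_⟩
  let f := fun (A : Set (ℕ × ℕ)) (κ : ℕ × ℕ × ℕ) => discTime A κ.1 κ.2.1 κ.2.2
  let M := max ((KBC C B).sup (f L)) ((KBC C B).sup (f L'))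
  rw [MDT_eq_aux hrec.1 M fun κ hκ => (Finset.le_sup (f := f L) hκ).trans (le_max_left _ _),
    MDT_eq_aux hc' M fun κ hκ => (Finset.le_sup (f := f L') hκ).trans (le_max_right _ _)]
  exact Finset.sum_le_sum fun t _ => sub_le_sub_left (main L' hL' t) _
end

section
/- Let L be a recursive schedule. Then for every b ∈ B and every scan (c,t) ∈ L with t ≤ b·|C| − 1, the configuration (c, b, t mod b) has discovery time exactly t, i.e., T_{(c,b,t mod b)}(L) = t. -/
open scoped Classical

/-- for a recursive schedule `L`, every scan `(c,t) ∈ L` with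
`t ≤ b·|C| − 1` results in the discovery of configuration `(c, b, t mod b)`
exactly at slot `t`, for every `b ∈ B`. -/
theorem stmt4 (C B : Finset ℕ) (hC : C.Nonempty) (hB : B.Nonempty)
    (hBpos : ∀ b ∈ B, 0 < b)
    (L : Set (ℕ × ℕ)) (hL : IsSchedule C L) (hrec : Recursive C B L)
    (b : ℕ) (hb : b ∈ B) (c t : ℕ) (hct : (c, t) ∈ L)
    (ht : t ≤ b * C.card - 1) :
    discTime L c b (t % b) = t := by
  have hbp := hBpos b hb
  have hCp := Finset.card_pos.mpr hC
  have hpos : 0 < b * C.card := Nat.mul_pos hbp hCp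
  have key : ∀ c ∈ C, ∀ δ < b, DiscoveredAt L c b δ (discTime L c b δ) := by
    intro c hc δ hδ
    exact Nat.sInf_mem (s := {t | DiscoveredAt L c b δ t}) (hrec.1 c hc b hb δ hδ)
  have himg : (C ×ˢ Finset.range b).image (fun p => discTime L p.1 b p.2)
      = Finset.range (b * C.card) := by
    apply Finset.eq_of_subset_of_card_le
    · intro x hx
      obtain ⟨⟨c', δ⟩, hp, rfl⟩ := Finset.mem_image.mp hx
      obtain ⟨h1, h2⟩ := Finset.mem_product.mp hp
      have := hrec.2 c' h1 b hb δ (Finset.mem_range.mp h2)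
      apply Finset.mem_range.mpr
      show discTime L c' b δ < _
      omega
    · rw [Finset.card_image_of_injOn]
      · simp [Nat.mul_comm]
      · rintro ⟨c₁, d₁⟩ h1 ⟨c₂, d₂⟩ h2 h
        obtain ⟨a1, a2⟩ := Finset.mem_product.mp (Finset.mem_coe.mp h1)
        obtain ⟨a3, a4⟩ := Finset.mem_product.mp (Finset.mem_coe.mp h2)
        have k1 := key c₁ a1 d₁ (Finset.mem_range.mp a2)
        have k2 := key c₂ a3 d₂ (Finset.mem_range.mp a4)
        change discTime L c₁ b d₁ = discTime L c₂ b d₂ at h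
        rw [h] at k1
        exact Prod.ext (hL.2 _ _ _ k1.1 k2.1) (k1.2.symm.trans k2.2)
  have hmem : t ∈ Finset.range (b * C.card) := Finset.mem_range.mpr (by omega)
  rw [← himg] at hmem
  obtain ⟨⟨c', δ⟩, hp, h⟩ := Finset.mem_image.mp hmem
  obtain ⟨h1, h2⟩ := Finset.mem_product.mp hp
  have k := key c' h1 δ (Finset.mem_range.mp h2)
  change discTime L c' b δ = t at h
  rw [h] at k
  obtain ⟨k1, k2⟩ := k
  have hc := hL.2 _ _ _ hct k1
  rw [k2, hc, h]
end

section
/- If B ∈ 𝔽₃, then a recursive schedule exists, i.e., there is a listening schedule L that is complete and such that for every b ∈ B every configuration with beacon period b has discovery time at most b·|C| − 1. -/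
open scoped Classical

theorem aux_exists (C : Finset ℕ) (hC : C.Nonempty) (B : Finset ℕ) :
    (∀ b ∈ B, 0 < b) → (∀ b ∈ B, ∀ b' ∈ B, b ∣ b' ∨ b' ∣ b) →
    ∃ f : ℕ → ℕ, (∀ t, f t ∈ C) ∧ ∀ b ∈ B, ∀ t < C.card * b, ∀ t' < C.card * b,
      t % b = t' % b → f t = f t' → t = t' := by
  induction B using Finset.induction_on_max with
  | empty =>
    intro _ _
    obtain ⟨c, hc⟩ := hC
    exact ⟨fun _ => c, fun _ => hc, by simp⟩
  | insert a B hlt ih =>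
    intro hpos hdvd
    obtain ⟨f, hfC, hf⟩ := ih (fun b hb => hpos b (Finset.mem_insert_of_mem hb))
      (fun b hb b' hb' => hdvd b (Finset.mem_insert_of_mem hb) b' (Finset.mem_insert_of_mem hb'))
    have ha : 0 < a := hpos a (Finset.mem_insert_self _ _)
    obtain ⟨M, hMa, hBM, hM⟩ : ∃ M, M < a ∧ (∀ b ∈ B, b ≤ M) ∧
        ∀ t < C.card * M, ∀ t' < C.card * M, t % a = t' % a → f t = f t' → t = t' := by
      rcases B.eq_empty_or_nonempty with h | h
      · subst h
        exact ⟨0, ha, by simp, by simp⟩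
      · have hm := B.max'_mem h
        refine ⟨B.max' h, hlt _ hm, fun b hb => B.le_max' b hb, ?_⟩
        intro t ht t' ht' hmod heq
        refine hf _ hm t ht t' ht' ?_ heq
        have hd : B.max' h ∣ a := by
          rcases hdvd _ (Finset.mem_insert_of_mem hm) a (Finset.mem_insert_self _ _) with h1 | h1
          · exact h1
          · have h2 := Nat.le_of_dvd (hpos _ (Finset.mem_insert_of_mem hm)) h1
            have h3 := hlt _ hm
            omega
        exact Nat.ModEq.of_dvd hd hmod
    have key : ∀ δ : ℕ, ∃ g : Fin C.card ≃ C,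
        ∀ j ∈ {j : Fin C.card | δ % a + a * j < C.card * M}, (g j : ℕ) = f (δ % a + a * j) := by
      intro δ
      refine Set.MapsTo.exists_equiv_extend_of_card_eq (f := fun j : Fin C.card => f (δ % a + a * j))
        (by simp) (fun j _ => hfC _) ?_
      intro j hj j' hj' heq
      have h1 := hM _ hj _ hj' (by simp) heq
      have h2 : a * (j : ℕ) = a * j' := by omega
      exact Fin.ext (Nat.eq_of_mul_eq_mul_left ha h2)
    choose g hg using key
    obtain ⟨c0, hc0⟩ := hC
    let f' : ℕ → ℕ := fun t => if h : t / a < C.card then (g (t % a) ⟨t / a, h⟩ : ℕ) else c0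
    have hdiv : ∀ t < C.card * a, t / a < C.card := fun t ht => (Nat.div_lt_iff_lt_mul ha).2 ht
    have hagree : ∀ t < C.card * M, f' t = f t := by
      intro t ht
      have h1 : t / a < C.card :=
        hdiv t (lt_of_lt_of_le ht (Nat.mul_le_mul_left _ hMa.le))
      have h2 : t % a % a + a * (t / a) = t := by
        rw [Nat.mod_mod]; exact Nat.mod_add_div t a
      have h3 := hg (t % a) ⟨t / a, h1⟩ (by simp only [Set.mem_setOf_eq]; rw [h2]; exact ht)
      simp only [f', dif_pos h1]
      rw [h3]
      simp only [h2]
    refine ⟨f', ?_, ?_⟩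
    · intro t
      by_cases h : t / a < C.card
      · simp only [f', dif_pos h]; exact (g _ _).2
      · simp only [f', dif_neg h]; exact hc0
    · intro b hb t ht t' ht' hmod heq
      rcases Finset.mem_insert.1 hb with rfl | hb
      · simp only [f', dif_pos (hdiv t ht), dif_pos (hdiv t' ht'), hmod] at heq
        have h1 := (g _).injective (Subtype.ext heq)
        have h2 : t / b = t' / b := congrArg Fin.val h1
        rw [← Nat.mod_add_div t b, ← Nat.mod_add_div t' b, hmod, h2]
      · have hle := Nat.mul_le_mul_left C.card (hBM b hb)
        rw [hagree t (by omega), hagree t' (by omega)] at heq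
        exact hf b hb t ht t' ht' hmod heq

/-- if `B ∈ 𝔽₃` (totally ordered by divisibility), a recursive
schedule exists. -/
theorem stmt5 (C B : Finset ℕ) (hC : C.Nonempty) (hB : B.Nonempty)
    (hBpos : ∀ b ∈ B, 0 < b)
    (hF3 : ∀ b ∈ B, ∀ b' ∈ B, b ∣ b' ∨ b' ∣ b) :
    ∃ L : Set (ℕ × ℕ), IsSchedule C L ∧ Recursive C B L := by
  obtain ⟨f, hfC, hf⟩ := aux_exists C hC B hBpos hF3
  have key : ∀ c ∈ C, ∀ b ∈ B, ∀ δ < b, ∃ t < b * C.card,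
      DiscoveredAt {p : ℕ × ℕ | f p.2 = p.1} c b δ t := by
    intro c hc b hb δ hδ
    have hlt : ∀ j : Fin C.card, δ + b * j < C.card * b := by
      intro j
      have h1 : b * ((j : ℕ) + 1) ≤ b * C.card := Nat.mul_le_mul_left _ j.2
      rw [Nat.mul_comm C.card]
      rw [Nat.mul_add] at h1
      omega
    let F : Fin C.card → C := fun j => ⟨f (δ + b * j), hfC _⟩
    have hinj : Function.Injective F := by
      intro j j' h
      have h1 := hf b hb _ (hlt j) _ (hlt j') (by simp) (congrArg Subtype.val h)
      have h2 : b * (j : ℕ) = b * j' := by omega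
      exact Fin.ext (Nat.eq_of_mul_eq_mul_left (hBpos b hb) h2)
    have hbij := (Fintype.bijective_iff_injective_and_card F).2 ⟨hinj, by simp⟩
    obtain ⟨j, hj⟩ := hbij.2 ⟨c, hc⟩
    refine ⟨δ + b * j, by rw [Nat.mul_comm b C.card]; exact hlt j, congrArg Subtype.val hj, ?_⟩
    rw [Nat.add_mul_mod_self_left, Nat.mod_eq_of_lt hδ]
  refine ⟨{p : ℕ × ℕ | f p.2 = p.1}, ⟨?_, ?_⟩, ?_, ?_⟩
  · intro p hp
    have hp' : f p.2 = p.1 := hp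
    rw [← hp']; exact hfC _
  · intro c c' t h h'
    exact Eq.trans (Eq.symm h) h'
  · intro c hc b hb δ hδ
    obtain ⟨t, _, h⟩ := key c hc b hb δ hδ
    exact ⟨t, h⟩
  · intro c hc b hb δ hδ
    obtain ⟨t, ht, h⟩ := key c hc b hb δ hδ
    have h1 : discTime {p : ℕ × ℕ | f p.2 = p.1} c b δ ≤ t := Nat.sInf_le h
    omega
end

section
/- Let B' ∈ 𝔽₃, let L' be a recursive schedule for the BP set B', and let b'' be a positive integer with max(B') ∣ b'' and b'' > max(B'). Then there exists a recursive schedule L'' for the BP set B'' = B' ∪ {b''} such that {(c,t) ∈ L' : t ≤ max(B')·|C| − 1} ⊆ L'', i.e., L'' scans the same channels as L' during the first max(B')·|C| time slots. -/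
open scoped Classical

lemma aux_unique (C : Finset ℕ) (L : Set (ℕ × ℕ)) (hL : IsSchedule C L) (m : ℕ) (hm : 0 < m)
    (h : ∀ c ∈ C, ∀ δ < m, ∃ t, t < m * C.card ∧ (c, t) ∈ L ∧ t % m = δ)
    (c t1 t2 : ℕ) (h1 : t1 < m * C.card) (h2 : t2 < m * C.card)
    (hc1 : (c, t1) ∈ L) (hc2 : (c, t2) ∈ L) (he : t1 % m = t2 % m) : t1 = t2 := by
  have hδ : t1 % m < m := Nat.mod_lt _ hm
  choose! g hg1 hg2 hg3 using fun c hc => h c hc (t1 % m) hδ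
  have hmaps : Set.MapsTo (fun c => g c / m) C (Finset.range C.card) := by
    intro c hc
    simp only [Finset.coe_range, Set.mem_Iio]
    exact Nat.div_lt_of_lt_mul (hg1 c hc)
  have hrec : ∀ x y : ℕ, x % m = y % m → x / m = y / m → x = y := by
    intro x y h1 h2
    rw [← Nat.div_add_mod x m, ← Nat.div_add_mod y m, h1, h2]
  have hinj : Set.InjOn (fun c => g c / m) C := by
    intro x hx y hy hxy
    have : g x = g y := hrec _ _ ((hg3 x hx).trans (hg3 y hy).symm) hxy
    exact hL.2 x y (g x) (hg2 x hx) (this ▸ hg2 y hy)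
  have hsurj : Set.SurjOn (fun c => g c / m) C (Finset.range C.card) :=
    Finset.surjOn_of_injOn_of_card_le _ hmaps hinj (by simp)
  have key : ∀ t, t < m * C.card → (c, t) ∈ L → t % m = t1 % m → t = g c := by
    intro t ht hct hmod
    obtain ⟨x, hx, hxe⟩ := hsurj (show t / m ∈ (Finset.range C.card : Set ℕ) by
      simp only [Finset.coe_range, Set.mem_Iio]
      exact Nat.div_lt_of_lt_mul ht)
    have h3 : t = g x := hrec _ _ (hmod.trans (hg3 x hx).symm) hxe.symm
    have : c = x := hL.2 c x t hct (h3 ▸ hg2 x hx)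
    rw [this]; exact h3
  rw [key t1 h1 hc1 rfl, key t2 h2 hc2 he.symm]

lemma aux_ext (C : Finset ℕ) (P : ℕ → ℕ → Prop) 
    (h1 : ∀ c ∈ C, ∀ i j, P c i → P c j → i = j)
    (h2 : ∀ c ∈ C, ∀ d ∈ C, ∀ i, P c i → P d i → c = d)
    (h3 : ∀ c ∈ C, ∀ i, P c i → i < C.card) :
    ∃ e : ℕ → ℕ, (∀ c ∈ C, e c < C.card) ∧ (∀ c ∈ C, ∀ d ∈ C, e c = e d → c = d) ∧
      ∀ c ∈ C, ∀ i, P c i → e c = i := by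
  let f : C → ℕ := fun c => if h : ∃ i, P c i then h.choose else 0
  have hf : ∀ c : C, (∃ i, P c i) → P c (f c) := by
    intro c h
    simp only [f, dif_pos h]
    exact h.choose_spec
  let s : Finset C := Finset.univ.filter fun c => ∃ i, P c i
  have hs : ∀ c, c ∈ s ↔ ∃ i, P c i := by intro c; simp [s]
  obtain ⟨g, hg⟩ := Finset.exists_equiv_extend_of_card_eq (α := C) (t := Finset.range C.card)
    (by simp) (s := s) (f := f)
    (by
      intro i hi
      obtain ⟨c, hc, rfl⟩ := Finset.mem_image.1 hi
      exact Finset.mem_range.2 (h3 c c.2 _ (hf c ((hs c).1 hc))))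
    (by
      intro x hx y hy hxy
      have hx' := hf x ((hs x).1 hx)
      have hy' := hf y ((hs y).1 hy)
      rw [← hxy] at hy'
      exact Subtype.ext (h2 x x.2 y y.2 _ hx' hy'))
  refine ⟨fun c => if h : c ∈ C then g ⟨c, h⟩ else 0, ?_, ?_, ?_⟩
  · intro c hc
    simp only [dif_pos hc]
    exact Finset.mem_range.1 (g ⟨c, hc⟩).2
  · intro c hc d hd h
    simp only [dif_pos hc, dif_pos hd] at h
    have := g.injective (Subtype.ext h)
    exact congrArg Subtype.val this
  · intro c hc i hi
    simp only [dif_pos hc]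
    rw [hg ⟨c, hc⟩ ((hs _).2 ⟨i, hi⟩)]
    exact h1 c hc _ _ (hf ⟨c, hc⟩ ⟨i, hi⟩) hi

/-- a recursive schedule for `B' ∈ 𝔽₃` can be extended to a recursive
schedule for `B'' = B' ∪ {b''}`, where `max(B') ∣ b''` and `b'' > max(B')`, scanning
the same channels during the first `max(B')·|C|` time slots. -/
theorem stmt6 (C B' : Finset ℕ) (hC : C.Nonempty) (hB' : B'.Nonempty)
    (hBpos : ∀ b ∈ B', 0 < b)
    (hF3 : ∀ b ∈ B', ∀ b2 ∈ B', b ∣ b2 ∨ b2 ∣ b)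
    (L' : Set (ℕ × ℕ)) (hL' : IsSchedule C L') (hrec : Recursive C B' L')
    (b'' : ℕ) (hdvd : B'.max' hB' ∣ b'') (hgt : B'.max' hB' < b'') :
    ∃ L'' : Set (ℕ × ℕ), IsSchedule C L'' ∧ Recursive C (insert b'' B') L'' ∧
      {p ∈ L' | p.2 ≤ B'.max' hB' * C.card - 1} ⊆ L'' := by
  have hmB := B'.max'_mem hB'
  have hle : ∀ b ∈ B', b ≤ B'.max' hB' := fun b hb => B'.le_max' b hb
  generalize B'.max' hB' = m at *
  have hm : 0 < m := hBpos m hmB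
  have hn : 0 < C.card := hC.card_pos
  have hb : 0 < b'' := hm.trans hgt
  have hmn : 0 < m * C.card := Nat.mul_pos hm hn
  have hdisc : ∀ c ∈ C, ∀ b ∈ B', ∀ δ < b, ∃ t, t < b * C.card ∧ (c, t) ∈ L' ∧ t % b = δ := by
    intro c hc b hbB δ hδ
    have h1 : DiscoveredAt L' c b δ (discTime L' c b δ) := Nat.sInf_mem (hrec.1 c hc b hbB δ hδ)
    have h2 := hrec.2 c hc b hbB δ hδ
    have h3 : 0 < b * C.card := Nat.mul_pos (hBpos b hbB) hn
    exact ⟨_, by omega, h1.1, h1.2⟩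
  have huniq := aux_unique C L' hL' m hm (fun c hc => hdisc c hc m hmB)
  have hext := fun ρ => aux_ext C
    (fun c i => (c, ρ % b'' + b'' * i) ∈ L' ∧ ρ % b'' + b'' * i < m * C.card)
    (by
      rintro c hc i j ⟨hi, hi'⟩ ⟨hj, hj'⟩
      obtain ⟨k, rfl⟩ := hdvd
      have := huniq c _ _ hi' hj' hi hj (by simp [mul_assoc])
      exact Nat.eq_of_mul_eq_mul_left hb (Nat.add_left_cancel this))
    (by
      rintro c hc d hd i ⟨hi, hi'⟩ ⟨hj, hj'⟩
      exact hL'.2 _ _ _ hi hj)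
    (by
      rintro c hc i ⟨hi, hi'⟩
      by_contra hcon
      have : m * C.card ≤ b'' * i := Nat.mul_le_mul hgt.le (not_lt.1 hcon)
      omega)
  choose e he1 he2 he3 using hext
  have hsub : ∀ c t, (c, t) ∈ L' → t < m * C.card → c ∈ C ∧ t / b'' = e (t % b'') c := by
    intro c t h ht
    have hc := hL'.1 _ h
    refine ⟨hc, (he3 (t % b'') c hc (t / b'') ?_).symm⟩
    simp only [Nat.mod_mod, Nat.mod_add_div]
    exact ⟨h, ht⟩
  have hfin : ∀ c ∈ C, ∀ b ∈ insert b'' B', ∀ δ < b, ∃ t, t < b * C.card ∧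
      DiscoveredAt {p | p.1 ∈ C ∧ p.2 / b'' = e (p.2 % b'') p.1} c b δ t := by
    intro c hc b hbB δ hδ
    rcases Finset.mem_insert.1 hbB with rfl | hbB
    · have hmod : (δ + b * e δ c) % b = δ := by
        rw [Nat.add_mul_mod_self_left, Nat.mod_eq_of_lt hδ]
      refine ⟨δ + b * e δ c, ?_, ⟨hc, ?_⟩, hmod⟩
      · have := Nat.mul_le_mul_left b (he1 δ c hc)
        rw [Nat.mul_succ] at this
        omega
      · change (δ + b * e δ c) / b = e ((δ + b * e δ c) % b) c
        rw [hmod, Nat.add_mul_div_left _ _ hb, Nat.div_eq_of_lt hδ, zero_add]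
    · obtain ⟨t, ht, htL, htm⟩ := hdisc c hc b hbB δ hδ
      exact ⟨t, ht, hsub c t htL (ht.trans_le (Nat.mul_le_mul_right _ (hle b hbB))), htm⟩
  refine ⟨{p | p.1 ∈ C ∧ p.2 / b'' = e (p.2 % b'') p.1}, ⟨fun p hp => hp.1, ?_⟩, ⟨?_, ?_⟩, ?_⟩
  · rintro c c' t ⟨hc, h⟩ ⟨hc', h'⟩
    exact he2 _ c hc c' hc' (h.symm.trans h')
  · intro c hc b hbB δ hδ
    obtain ⟨t, _, h⟩ := hfin c hc b hbB δ hδ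
    exact ⟨t, h⟩
  · intro c hc b hbB δ hδ
    obtain ⟨t, ht, h⟩ := hfin c hc b hbB δ hδ
    have : discTime _ c b δ ≤ t := Nat.sInf_le h
    exact this.trans (by omega)
  · rintro ⟨c, t⟩ ⟨h, ht⟩
    exact hsub c t h (by simp only at ht; omega)
end

section
/- If B ∈ 𝔽₂, then every greedy schedule is WDT-optimal: it is complete and every configuration in K_BC has discovery time at most max(B)·|C| − 1. -/
open scoped Classical

theorem stmt7_key (C B : Finset ℕ) (hC : C.Nonempty) (M : ℕ) (hM : M ∈ B) (hM0 : 0 < M)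
    (hBpos : ∀ b ∈ B, 0 < b)
    (hF2 : ∀ b ∈ B, b ∣ M)
    (L : Set (ℕ × ℕ)) (hg : Greedy C B L) (c : ℕ) (hc : c ∈ C) (δ : ℕ) (hδ : δ < M) :
    ∃ j < C.card, (c, δ + j * M) ∈ L := by
  by_contra! hno
  have hw : ∀ b ∈ B, 0 < weight C B b := by
    intro b hb
    have h1 : 0 < b := hBpos b hb
    have h2 : 0 < B.card := Finset.card_pos.mpr ⟨b, hb⟩
    have h3 : 0 < C.card := Finset.card_pos.mpr hC
    unfold weight
    positivity
  have hstep : ∀ j, ∃ d, j < C.card → d ∈ C ∧ (d, δ + j * M) ∈ L ∧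
      ∀ i < j, (d, δ + i * M) ∉ L := by
    intro j
    by_cases hj : j < C.card
    swap
    · exact ⟨0, fun h => absurd h hj⟩
    have hpos : 0 < gain C B L c (δ + j * M) := by
      unfold gain
      apply Finset.sum_pos
      · intro b hb
        exact hw b (Finset.mem_filter.mp hb).1
      · refine ⟨M, Finset.mem_filter.mpr ⟨hM, ?_⟩⟩
        rintro ⟨t', ht', hL, hmod⟩
        rw [Nat.add_mul_mod_self_right, Nat.mod_eq_of_lt hδ] at hmod
        have e : t' = δ + (t' / M) * M := by
          have := Nat.mod_add_div t' M
          rw [hmod] at this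
          rw [mul_comm]; exact this.symm
        have hlt : t' / M < j := by
          by_contra! h
          have := Nat.mul_le_mul_right M h
          omega
        rw [e] at hL
        exact hno _ (hlt.trans hj) hL
    obtain ⟨d, hd, hdL, hmax⟩ := hg.2 _ ⟨c, hc, hpos⟩
    refine ⟨d, fun _ => ⟨hd, hdL, fun i hi hiL => ?_⟩⟩
    have h1 := hpos.trans_le (hmax c hc)
    have h0 : gain C B L d (δ + j * M) = 0 := by
      unfold gain
      rw [Finset.filter_eq_empty_iff.mpr, Finset.sum_empty]
      intro b hb
      rw [not_not]
      refine ⟨δ + i * M, ?_, hiL, ?_⟩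
      · have := Nat.mul_lt_mul_of_pos_right hi hM0
        omega
      · obtain ⟨q, rfl⟩ := hF2 b hb
        have e : ∀ x, δ + x * (b * q) = δ + b * (x * q) := fun x => by ring
        rw [e, e, Nat.add_mul_mod_self_left, Nat.add_mul_mod_self_left]
    linarith
  choose f hf using hstep
  have hcard : (Finset.range C.card).card ≤ (C.erase c).card := by
    apply Finset.card_le_card_of_injOn f
    · intro j hj
      have hj' : j < C.card := by simpa using hj
      have := hf j hj'
      simp only [Finset.coe_erase, Set.mem_diff, Finset.mem_coe, Set.mem_singleton_iff]
      refine ⟨this.1, fun h => hno j hj' ?_⟩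
      rw [← h]; exact this.2.1
    · intro i hi j hj hij
      have hi' : i < C.card := by simpa using hi
      have hj' : j < C.card := by simpa using hj
      rcases lt_trichotomy i j with h | h | h
      · exact absurd (hij ▸ (hf i hi').2.1) ((hf j hj').2.2 i h)
      · exact h
      · exact absurd (hij ▸ (hf j hj').2.1) ((hf i hi').2.2 j h)
  have := Finset.card_erase_lt_of_mem hc
  rw [Finset.card_range] at hcard
  omega

/-- if `B ∈ 𝔽₂` (every `b ∈ B` divides `max(B)`), every greedy
schedule is WDT-optimal: complete with all discovery times at most `max(B)·|C| − 1`. -/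
theorem stmt7 (C B : Finset ℕ) (hC : C.Nonempty) (hB : B.Nonempty)
    (hBpos : ∀ b ∈ B, 0 < b)
    (hF2 : ∀ b ∈ B, b ∣ B.max' hB)
    (L : Set (ℕ × ℕ)) (hg : Greedy C B L) :
    Complete C B L ∧
      ∀ c ∈ C, ∀ b ∈ B, ∀ δ < b, discTime L c b δ ≤ B.max' hB * C.card - 1 := by
  have hM := B.max'_mem hB
  have key : ∀ c ∈ C, ∀ b ∈ B, ∀ δ < b,
      ∃ t ≤ B.max' hB * C.card - 1, DiscoveredAt L c b δ t := by
    intro c hc b hb δ hδ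
    have hbM : b ≤ B.max' hB := B.le_max' b hb
    have hδM := hδ.trans_le hbM
    obtain ⟨j, hj, hjL⟩ := stmt7_key C B hC _ hM (hBpos _ hM) hBpos hF2 L hg c hc δ hδM
    refine ⟨_, ?_, hjL, ?_⟩
    · have := Nat.mul_le_mul_left (B.max' hB) (Nat.succ_le_of_lt hj)
      rw [Nat.mul_succ, mul_comm] at this
      omega
    · obtain ⟨q, hq⟩ := hF2 b hb
      have e : δ + j * B.max' hB = δ + b * (j * q) := by rw [hq]; ring
      rw [e, Nat.add_mul_mod_self_left, Nat.mod_eq_of_lt hδ]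
  refine ⟨fun c hc b hb δ hδ => ?_, fun c hc b hb δ hδ => ?_⟩
  · obtain ⟨t, _, h⟩ := key c hc b hb δ hδ
    exact ⟨t, h⟩
  · obtain ⟨t, ht, h⟩ := key c hc b hb δ hδ
    exact (Nat.sInf_le h).trans ht
end

section
/- Let B ∈ 𝔽₂ and let L be a listening schedule. If (c,t) ∈ L and there exists t' < t with t' ≡ t (mod max(B)) and (c,t') ∈ L, then no configuration in K_BC has discovery time equal to t, i.e., the scan at slot t results in zero new discoveries. -/
open scoped Classical

/-- for `B ∈ 𝔽₂`, if channel `c` is scanned at slot `t` but was already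
scanned at some earlier slot `t' ≡ t (mod max(B))`, then no configuration has
discovery time equal to `t`. -/
theorem stmt8 (C B : Finset ℕ) (hC : C.Nonempty) (hB : B.Nonempty)
    (hBpos : ∀ b ∈ B, 0 < b)
    (hF2 : ∀ b ∈ B, b ∣ B.max' hB)
    (L : Set (ℕ × ℕ)) (hL : IsSchedule C L)
    (c t t' : ℕ) (hct : (c, t) ∈ L) (ht' : t' < t)
    (hmod : t' % B.max' hB = t % B.max' hB) (hct' : (c, t') ∈ L) :
    ∀ c' ∈ C, ∀ b ∈ B, ∀ δ < b,
      ¬ (DiscoveredAt L c' b δ t ∧ ∀ s < t, ¬ DiscoveredAt L c' b δ s) := by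
  rintro c' - b hb δ - ⟨⟨h1, h2⟩, h3⟩
  obtain rfl := hL.2 _ _ _ hct h1
  have hm : t' % b = t % b := Nat.ModEq.of_dvd (hF2 b hb) hmod
  exact h3 t' ht' ⟨hct', hm.trans h2⟩
end

section
/- Let L be any listening schedule and let t be a time slot with t ≤ max(B)·|C| − 1. Then there exists a channel c ∈ C such that the configuration (c, max(B), t mod max(B)) is not discovered at any time slot t' < t by L. -/
open scoped Classical

/-- for any schedule `L` and any slot `t ≤ max(B)·|C| − 1`, some channel
`c ∈ C` exists such that configuration `(c, max(B), t mod max(B))` has not been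
discovered at any earlier slot. -/
theorem stmt9 (C B : Finset ℕ) (hC : C.Nonempty) (hB : B.Nonempty)
    (hBpos : ∀ b ∈ B, 0 < b)
    (L : Set (ℕ × ℕ)) (hL : IsSchedule C L)
    (t : ℕ) (ht : t ≤ B.max' hB * C.card - 1) :
    ∃ c ∈ C, ∀ t' < t, ¬ DiscoveredAt L c (B.max' hB) (t % B.max' hB) t' := by
  have hm : 0 < B.max' hB := hBpos _ (B.max'_mem hB)
  generalize B.max' hB = m at *
  have hc : 0 < C.card := hC.card_pos
  have hpos : 0 < m * C.card := Nat.mul_pos hm hc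
  have hdiv : t / m < C.card := by
    rw [Nat.div_lt_iff_lt_mul hm, mul_comm]
    omega
  by_contra! hcon
  choose! f hf hd using hcon
  have hle : C.card ≤ (Finset.range (t / m)).card := by
    apply Finset.card_le_card_of_injOn (fun c => f c / m)
    · intro c hc
      have h1 := hf c hc
      have h2 := (hd c hc).2
      have h3 := Nat.div_add_mod (f c) m
      have h4 := Nat.div_add_mod t m
      simp only [Finset.coe_range, Set.mem_Iio]
      have h5 : m * (f c / m) < m * (t / m) := by omega
      exact lt_of_mul_lt_mul_left h5 (Nat.zero_le _)
    · intro c hc c' hc' heq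
      have h2 := (hd c hc).2
      have h2' := (hd c' hc').2
      have h3 := Nat.div_add_mod (f c) m
      have h3' := Nat.div_add_mod (f c') m
      have heq' : f c / m = f c' / m := heq
      have hff : f c = f c' := by rw [← h3, ← h3', heq', h2, h2']
      have h6 := (hd c hc).1
      have h6' := (hd c' hc').1
      rw [← hff] at h6'
      exact hL.2 _ _ _ h6 h6'
  rw [Finset.card_range] at hle
  omega
end

section
/- Let B ∈ 𝔽₃ and let L be a recursive schedule. Then for every time slot t ∈ ℕ, the number of configurations κ ∈ K_BC with discovery time T_κ(L) = t equals |{b ∈ B : t ≤ b·|C| − 1}|. In particular, the number of configurations discovered per time slot is monotonically decreasing in t. -/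
open scoped Classical

/-- for `B ∈ 𝔽₃` and a recursive schedule `L`, the number of
configurations with discovery time `t` equals `|{b ∈ B : t ≤ b·|C| − 1}|`;
in particular it is monotonically decreasing in `t`. -/
theorem stmt12 (C B : Finset ℕ) (hC : C.Nonempty) (hB : B.Nonempty)
    (hBpos : ∀ b ∈ B, 0 < b)
    (hF3 : ∀ b ∈ B, ∀ b' ∈ B, b ∣ b' ∨ b' ∣ b)
    (L : Set (ℕ × ℕ)) (hL : IsSchedule C L) (hrec : Recursive C B L) :
    (∀ t : ℕ,
      ((KBC C B).filter (fun κ => discTime L κ.1 κ.2.1 κ.2.2 = t)).card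
        = (B.filter (fun b => t ≤ b * C.card - 1)).card) ∧
    (∀ t t' : ℕ, t ≤ t' →
      ((KBC C B).filter (fun κ => discTime L κ.1 κ.2.1 κ.2.2 = t')).card
        ≤ ((KBC C B).filter (fun κ => discTime L κ.1 κ.2.1 κ.2.2 = t)).card) := by
  have hspec : ∀ c ∈ C, ∀ b ∈ B, ∀ δ < b, DiscoveredAt L c b δ (discTime L c b δ) := by
    intro c hc b hb δ hδ
    exact Nat.sInf_mem (s := {t | DiscoveredAt L c b δ t}) (hrec.1 c hc b hb δ hδ)
  have hmem : ∀ c b δ : ℕ, (c, b, δ) ∈ KBC C B ↔ c ∈ C ∧ b ∈ B ∧ δ < b := by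
    intro c b δ
    simp only [KBC, Finset.mem_filter, Finset.mem_product, Finset.mem_range]
    constructor
    · rintro ⟨⟨h1, h2, -⟩, h4⟩
      exact ⟨h1, h2, h4⟩
    · rintro ⟨h1, h2, h3⟩
      exact ⟨⟨h1, h2, lt_of_lt_of_le h3 (Finset.le_sup (f := id) h2)⟩, h3⟩
  have hCpos : 0 < C.card := hC.card_pos
  have hsurj : ∀ b ∈ B, ∀ t, t < b * C.card →
      ∃ c ∈ C, ∃ δ, δ < b ∧ discTime L c b δ = t := by
    intro b hb t ht
    have hbp := hBpos b hb
    have hpos : 0 < b * C.card := Nat.mul_pos hbp hCpos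
    have key := Finset.surj_on_of_inj_on_of_card_le
      (s := C ×ˢ Finset.range b) (t := Finset.range (b * C.card))
      (fun p _ => discTime L p.1 b p.2)
      (by
        rintro ⟨c, δ⟩ hp
        simp only [Finset.mem_product, Finset.mem_range] at hp ⊢
        have := hrec.2 c hp.1 b hb δ hp.2
        omega)
      (by
        rintro ⟨c, δ⟩ ⟨c', δ'⟩ hp hp' heq
        simp only [Finset.mem_product, Finset.mem_range] at hp hp' heq
        have h1 := hspec c hp.1 b hb δ hp.2
        have h2 := hspec c' hp'.1 b hb δ' hp'.2
        rw [← heq] at h2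
        exact Prod.ext (hL.2 _ _ _ h1.1 h2.1) (h1.2.symm.trans h2.2))
      (by simp [Finset.card_product, mul_comm])
      t (Finset.mem_range.2 ht)
    obtain ⟨⟨c, δ⟩, hp, h⟩ := key
    simp only [Finset.mem_product, Finset.mem_range] at hp
    exact ⟨c, hp.1, δ, hp.2, h.symm⟩
  have main : ∀ t : ℕ,
      ((KBC C B).filter (fun κ => discTime L κ.1 κ.2.1 κ.2.2 = t)).card
        = (B.filter (fun b => t ≤ b * C.card - 1)).card := by
    intro t
    refine Finset.card_bij (fun κ _ => κ.2.1) ?_ ?_ ?_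
    · rintro ⟨c, b, δ⟩ h
      rw [Finset.mem_filter, hmem] at h
      obtain ⟨⟨h1, h2, h3⟩, h4⟩ := h
      exact Finset.mem_filter.2 ⟨h2, h4 ▸ hrec.2 c h1 b h2 δ h3⟩
    · rintro ⟨c, b, δ⟩ h ⟨c', b', δ'⟩ h' heq
      rw [Finset.mem_filter, hmem] at h h'
      obtain ⟨⟨h1, h2, h3⟩, h4⟩ := h
      obtain ⟨⟨h1', h2', h3'⟩, h4'⟩ := h'
      simp only at heq h4 h4'
      subst heq
      have e1 := hspec c h1 b h2 δ h3
      have e2 := hspec c' h1' b h2' δ' h3'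
      rw [h4] at e1
      rw [h4'] at e2
      have hc : c = c' := hL.2 _ _ _ e1.1 e2.1
      have hd : δ = δ' := e1.2.symm.trans e2.2
      rw [hc, hd]
    · intro b hb
      rw [Finset.mem_filter] at hb
      have hpos : 0 < b * C.card := Nat.mul_pos (hBpos b hb.1) hCpos
      obtain ⟨c, hc, δ, hδ, h⟩ := hsurj b hb.1 t (by omega)
      exact ⟨(c, b, δ), Finset.mem_filter.2 ⟨(hmem c b δ).2 ⟨hc, hb.1, hδ⟩, h⟩, rfl⟩
  refine ⟨main, ?_⟩
  intro t t' htt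
  rw [main, main]
  apply Finset.card_le_card
  intro b hb
  rw [Finset.mem_filter] at hb ⊢
  exact ⟨hb.1, htt.trans hb.2⟩
end

section
/- Let f : ℕ^{K_BC} → ℝ be strictly increasing in each coordinate. If a complete schedule L minimizes f((T_κ(L))_{κ∈K_BC}) among all complete schedules, then every configuration κ ∈ K_BC has discovery time T_κ(L) ≤ lcm(B)·|C| − 1, i.e., the worst-case discovery time of L is at most lcm(B)·|C| time slots. -/
open scoped Classical

lemma aux_mono {ι : Type*} [Fintype ι] [DecidableEq ι] (f : (ι → ℕ) → ℝ)
    (hf : ∀ (v : ι → ℕ) (k : ι) (n m : ℕ), n < m →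
      f (Function.update v k n) < f (Function.update v k m))
    (v w : ι → ℕ) (h : v ≤ w) : f v ≤ f w := by
  have key : ∀ s : Finset ι, f (s.piecewise v w) ≤ f w := by
    intro s
    induction s using Finset.induction_on with
    | empty => simp
    | insert j s hj ih =>
      rw [Finset.piecewise_insert]
      refine le_trans ?_ ih
      have e : s.piecewise v w = Function.update (s.piecewise v w) j (w j) := by
        rw [eq_comm, Function.update_eq_self_iff]
        simp [hj]
      rcases (h j).lt_or_eq with h1 | h1
      · conv_rhs => rw [e]
        exact (hf _ _ _ _ h1).le
      · rw [h1, ← e]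
  simpa using key Finset.univ

lemma aux_strict {ι : Type*} [Fintype ι] [DecidableEq ι] (f : (ι → ℕ) → ℝ)
    (hf : ∀ (v : ι → ℕ) (k : ι) (n m : ℕ), n < m →
      f (Function.update v k n) < f (Function.update v k m))
    (v w : ι → ℕ) (h : v ≤ w) (k : ι) (hk : v k < w k) : f v < f w := by
  have h1 := hf w k _ _ hk
  rw [Function.update_eq_self] at h1
  refine lt_of_le_of_lt (aux_mono f hf v _ ?_) h1
  intro j
  by_cases hj : j = k
  · subst hj; simp
  · simp [hj, h j]

lemma aux_slot (C : Finset ℕ) (L : Set (ℕ × ℕ)) (hL : IsSchedule C L) (M T c : ℕ)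
    (hM : 0 < M) (hc : c ∈ C) (hT : M * C.card ≤ T)
    (hno : ∀ s < T, s % M = T % M → (c, s) ∉ L) :
    ∃ s < T, s % M = T % M ∧
      ∀ c', (c', s) ∈ L → ∃ s' < s, s' % M = s % M ∧ (c', s') ∈ L := by
  by_contra! hcon
  have hlt : ∀ i < C.card, T % M + i * M < T := by
    intro i hi
    have h1 := Nat.mod_lt T hM
    have h2 : (i + 1) * M ≤ C.card * M := Nat.mul_le_mul_right _ hi
    nlinarith
  have hmod : ∀ i, (T % M + i * M) % M = T % M := by
    intro i; simp
  have hex : ∀ i, ∃ c', i < C.card → (c', T % M + i * M) ∈ L ∧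
      ∀ s' < T % M + i * M, s' % M = T % M → (c', s') ∉ L := by
    intro i
    by_cases hi : i < C.card
    · obtain ⟨c', h1, h2⟩ := hcon _ (hlt i hi) (hmod i)
      refine ⟨c', fun _ => ⟨h1, fun s' hs' he => h2 s' hs' ?_⟩⟩
      rw [he, hmod]
    · exact ⟨0, fun h => absurd h hi⟩
  choose g hg using hex
  have hcard : (C.erase c).card < (Finset.range C.card).card := by
    rw [Finset.card_range]
    exact Finset.card_erase_lt_of_mem hc
  have hmaps : ∀ i ∈ Finset.range C.card, g i ∈ C.erase c := by
    intro i hi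
    have hi' := Finset.mem_range.1 hi
    refine Finset.mem_erase.2 ⟨?_, hL.1 _ (hg i hi').1⟩
    intro he
    have := (hg i hi').1
    rw [he] at this
    exact hno _ (hlt i hi') (hmod i) this
  obtain ⟨i, hi, j, hj, hij, he⟩ := Finset.exists_ne_map_eq_of_card_lt_of_maps_to hcard hmaps
  have hi' := Finset.mem_range.1 hi
  have hj' := Finset.mem_range.1 hj
  rcases lt_or_gt_of_ne hij with h | h
  · refine (hg j hj').2 (T % M + i * M) ?_ (hmod i) (he ▸ (hg i hi').1)
    have := Nat.mul_lt_mul_of_pos_right h hM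
    omega
  · refine (hg i hi').2 (T % M + j * M) ?_ (hmod j) (he ▸ (hg j hj').1)
    have := Nat.mul_lt_mul_of_pos_right h hM
    omega

/-- if `f : ℕ^{K_BC} → ℝ` is strictly increasing in each coordinate and
a complete schedule `L` minimizes `f((T_κ(L))_κ)` among complete schedules, then every
configuration has discovery time at most `lcm(B)·|C| − 1`. -/
theorem stmt13 (C B : Finset ℕ) (hC : C.Nonempty) (hB : B.Nonempty)
    (hBpos : ∀ b ∈ B, 0 < b)
    (f : ({κ : ℕ × ℕ × ℕ // κ ∈ KBC C B} → ℕ) → ℝ)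
    (hf : ∀ (v : {κ : ℕ × ℕ × ℕ // κ ∈ KBC C B} → ℕ)
        (κ : {κ : ℕ × ℕ × ℕ // κ ∈ KBC C B}) (n m : ℕ), n < m →
      f (Function.update v κ n) < f (Function.update v κ m))
    (L : Set (ℕ × ℕ)) (hL : IsSchedule C L) (hcomp : Complete C B L)
    (hmin : ∀ L' : Set (ℕ × ℕ), IsSchedule C L' → Complete C B L' →
      f (fun κ => discTime L κ.1.1 κ.1.2.1 κ.1.2.2) ≤
        f (fun κ => discTime L' κ.1.1 κ.1.2.1 κ.1.2.2)) :
    ∀ c ∈ C, ∀ b ∈ B, ∀ δ < b, discTime L c b δ ≤ B.lcm id * C.card - 1 := by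
  intro c hc b hb δ hδ
  by_contra hcon
  have hM : 0 < B.lcm id := by
    rw [Nat.pos_iff_ne_zero]
    intro h0
    rw [Finset.lcm_eq_zero_iff] at h0
    obtain ⟨x, hx, hx0⟩ := h0
    have := hBpos x hx
    simp at hx0
    omega
  have hdvd : ∀ b ∈ B, b ∣ B.lcm id := fun b hb => Finset.dvd_lcm (f := id) hb
  have hmodb : ∀ b ∈ B, ∀ x y, x % B.lcm id = y % B.lcm id → x % b = y % b := by
    intro b hb x y h
    exact Nat.ModEq.of_dvd (hdvd b hb) h
  have hmem : ∀ c ∈ C, ∀ b ∈ B, ∀ δ < b,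
      DiscoveredAt L c b δ (discTime L c b δ) := fun c hc b hb δ hδ =>
    Nat.sInf_mem (s := {t | DiscoveredAt L c b δ t}) (hcomp c hc b hb δ hδ)
  have hT : B.lcm id * C.card ≤ discTime L c b δ := by omega
  have hTd := hmem c hc b hb δ hδ
  obtain ⟨s, hsT, hsm, hs⟩ := aux_slot C L hL (B.lcm id) (discTime L c b δ) c hM hc hT (by
    intro s hs hm hin
    refine Nat.notMem_of_lt_sInf hs (show DiscoveredAt L c b δ s from ⟨hin, ?_⟩)
    rw [hmodb b hb _ _ hm]
    exact hTd.2)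
  let L' : Set (ℕ × ℕ) := {p | (p.2 ≠ s ∧ p ∈ L) ∨ p = (c, s)}
  have hL' : IsSchedule C L' := by
    refine ⟨?_, ?_⟩
    · rintro p (⟨_, hp⟩ | rfl)
      · exact hL.1 p hp
      · exact hc
    · rintro c1 c2 t (⟨h1, h2⟩ | h1) (⟨h3, h4⟩ | h3)
      · exact hL.2 _ _ _ h2 h4
      · simp only [Prod.mk.injEq] at h3; exact absurd h3.2 h1
      · simp only [Prod.mk.injEq] at h1; exact absurd h1.2 h3
      · simp only [Prod.mk.injEq] at h1 h3; rw [h1.1, h3.1]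
  have himp : ∀ c1, ∀ b1 ∈ B, ∀ δ1 t, DiscoveredAt L c1 b1 δ1 t →
      ∃ t' ≤ t, DiscoveredAt L' c1 b1 δ1 t' := by
    rintro c1 b1 hb1 δ1 t ⟨h1, h2⟩
    by_cases hts : t = s
    · subst hts
      obtain ⟨s', hs', hm, hin⟩ := hs c1 h1
      exact ⟨s', hs'.le, Or.inl ⟨hs'.ne, hin⟩, (hmodb b1 hb1 _ _ hm).trans h2⟩
    · exact ⟨t, le_rfl, Or.inl ⟨hts, h1⟩, h2⟩
  have hcomp' : Complete C B L' := by
    intro c1 hc1 b1 hb1 δ1 hδ1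
    obtain ⟨t, ht⟩ := hcomp c1 hc1 b1 hb1 δ1 hδ1
    obtain ⟨t', _, h⟩ := himp c1 b1 hb1 δ1 t ht
    exact ⟨t', h⟩
  have hk : (c, b, δ) ∈ KBC C B := by
    simp only [KBC, Finset.mem_filter, Finset.mem_product, Finset.mem_range]
    have : b ≤ B.sup id := Finset.le_sup (f := id) hb
    exact ⟨⟨hc, hb, by omega⟩, hδ⟩
  refine absurd (hmin L' hL' hcomp') (not_le.2 ?_)
  refine aux_strict f hf _ _ ?_ ⟨(c, b, δ), hk⟩ ?_
  · rintro ⟨⟨c1, b1, δ1⟩, h⟩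
    simp only [KBC, Finset.mem_filter, Finset.mem_product, Finset.mem_range] at h
    obtain ⟨t', hle, h'⟩ := himp c1 b1 h.1.2.1 δ1 _ (hmem c1 h.1.1 b1 h.1.2.1 δ1 h.2)
    exact (Nat.sInf_le (show t' ∈ {t | DiscoveredAt L' c1 b1 δ1 t} from h')).trans hle
  · have h' : DiscoveredAt L' c b δ s := ⟨Or.inr rfl, (hmodb b hb _ _ hsm).trans hTd.2⟩
    exact lt_of_le_of_lt (Nat.sInf_le (show s ∈ {t | DiscoveredAt L' c b δ t} from h')) hsT
end

section
/- For every complete schedule L with some configuration having discovery time greater than lcm(B)·|C| − 1, there exists a complete schedule L* such that T_κ(L*) ≤ T_κ(L) for every configuration κ ∈ K_BC, T_κ(L*) ≤ lcm(B)·|C| − 1 for every κ ∈ K_BC, and T_κ(L*) < T_κ(L) for at least one κ. -/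
open scoped Classical

theorem assign_aux (n : ℕ) : ∀ (C : Finset ℕ), C.card = n → ∀ S : ℕ → ℕ → Prop,
    (∀ c c' k, S c k → S c' k → c = c') →
    ∃ σ : ℕ → ℕ, (∀ c ∈ C, ∀ c' ∈ C, σ c = σ c' → c = c') ∧ (∀ c ∈ C, σ c < n) ∧
      (∀ c ∈ C, ∀ k, S c k → σ c ≤ k) := by
  induction n with
  | zero =>
    intro C hC S hS
    have : C = ∅ := Finset.card_eq_zero.mp hC
    subst this
    exact ⟨id, by simp, by simp, by simp⟩
  | succ n ih =>
    intro C hC S hS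
    have hex : ∃ c ∈ C, ∀ k, S c k → n ≤ k := by
      by_contra hcon
      push Not at hcon
      choose! f hf using hcon
      have h1 : C.card ≤ (Finset.range n).card := by
        apply Finset.card_le_card_of_injOn f
        · intro c hc
          simpa using (hf c hc).2
        · intro c hc c' hc' h
          have h2 := (hf c' hc').1
          rw [← h] at h2
          exact hS _ _ _ (hf c hc).1 h2
      rw [Finset.card_range] at h1
      omega
    obtain ⟨d, hd, hdk⟩ := hex
    obtain ⟨σ, h1, h2, h3⟩ := ih (C.erase d) (by rw [Finset.card_erase_of_mem hd]; omega) S hS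
    have key : ∀ c ∈ C, c ≠ d → c ∈ C.erase d := fun c hc h => Finset.mem_erase.mpr ⟨h, hc⟩
    refine ⟨fun c => if c = d then n else σ c, ?_, ?_, ?_⟩
    · intro c hc c' hc' h
      have := key c hc
      have := key c' hc'
      grind
    · intro c hc
      have := key c hc
      grind
    · intro c hc k hk
      have := key c hc
      grind

/-- any complete schedule with some discovery time exceeding
`lcm(B)·|C| − 1` can be improved to a complete schedule whose discovery times are
pointwise no larger, all at most `lcm(B)·|C| − 1`, and strictly smaller for at least
one configuration. -/
theorem stmt14 (C B : Finset ℕ) (hC : C.Nonempty) (hB : B.Nonempty)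
    (hBpos : ∀ b ∈ B, 0 < b)
    (L : Set (ℕ × ℕ)) (hL : IsSchedule C L) (hcomp : Complete C B L)
    (hbad : ∃ c ∈ C, ∃ b ∈ B, ∃ δ < b,
      B.lcm id * C.card - 1 < discTime L c b δ) :
    ∃ Lstar : Set (ℕ × ℕ), IsSchedule C Lstar ∧ Complete C B Lstar ∧
      (∀ c ∈ C, ∀ b ∈ B, ∀ δ < b, discTime Lstar c b δ ≤ discTime L c b δ) ∧
      (∀ c ∈ C, ∀ b ∈ B, ∀ δ < b, discTime Lstar c b δ ≤ B.lcm id * C.card - 1) ∧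
      (∃ c ∈ C, ∃ b ∈ B, ∃ δ < b, discTime Lstar c b δ < discTime L c b δ) := by
  have hN : 0 < B.lcm id := by
    apply Nat.pos_of_ne_zero
    intro h
    rw [Finset.lcm_eq_zero_iff] at h
    simp at h
    exact absurd (hBpos 0 h) (lt_irrefl 0)
  have hdvd : ∀ b ∈ B, b ∣ B.lcm id := fun b hb => Finset.dvd_lcm (f := id) hb
  generalize B.lcm id = N at hN hdvd hbad ⊢
  have hσ := fun r : ℕ => assign_aux C.card C rfl (fun c k => (c, r + N * k) ∈ L)
    (fun c c' k h h' => hL.2 c c' _ h h')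
  choose σ hinj hlt hle using hσ
  let M : Set (ℕ × ℕ) := {p | p.1 ∈ C ∧ p.2 = p.2 % N + N * σ (p.2 % N) p.1}
  have key : ∀ c t, (c, t) ∈ L → ∃ t', (c, t') ∈ M ∧ t' ≤ t ∧ t' ≤ N * C.card - 1 ∧
      t' % N = t % N := by
    intro c t h
    have hc : c ∈ C := hL.1 _ h
    have hmod : (t % N + N * σ (t % N) c) % N = t % N := by simp
    refine ⟨t % N + N * σ (t % N) c, ⟨hc, ?_⟩, ?_, ?_, hmod⟩
    · simp only [hmod]
    · have h1 := hle (t % N) c hc (t / N) (by simpa only [Nat.mod_add_div] using h)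
      have h2 := Nat.mul_le_mul_left N h1
      have h3 := Nat.mod_add_div t N
      omega
    · have h1 := Nat.mul_le_mul_left N (hlt (t % N) c hc)
      have h2 := Nat.mod_lt t hN
      rw [Nat.mul_succ] at h1
      omega
  have key2 : ∀ c ∈ C, ∀ b ∈ B, ∀ δ < b, ∃ t', DiscoveredAt M c b δ t' ∧
      t' ≤ discTime L c b δ ∧ t' ≤ N * C.card - 1 := by
    intro c hc b hb δ hδ
    have hm : DiscoveredAt L c b δ (discTime L c b δ) := Nat.sInf_mem (hcomp c hc b hb δ hδ)
    obtain ⟨t', h1, h2, h3, h4⟩ := key c _ hm.1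
    refine ⟨t', ⟨h1, ?_⟩, h2, h3⟩
    rw [← hm.2]
    exact Nat.ModEq.of_dvd (hdvd b hb) h4
  have hbd : ∀ c ∈ C, ∀ b ∈ B, ∀ δ < b, discTime M c b δ ≤ N * C.card - 1 := by
    intro c hc b hb δ hδ
    obtain ⟨t', h1, h2, h3⟩ := key2 c hc b hb δ hδ
    exact (Nat.sInf_le h1).trans h3
  refine ⟨M, ⟨fun p hp => hp.1, ?_⟩, ?_, ?_, hbd, ?_⟩
  · intro c c' t h h'
    apply hinj (t % N) c h.1 c' h'.1
    have h1 := h.2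
    have h2 := h'.2
    simp only at h1 h2
    apply Nat.eq_of_mul_eq_mul_left hN
    omega
  · intro c hc b hb δ hδ
    obtain ⟨t', h1, _⟩ := key2 c hc b hb δ hδ
    exact ⟨t', h1⟩
  · intro c hc b hb δ hδ
    obtain ⟨t', h1, h2, h3⟩ := key2 c hc b hb δ hδ
    exact (Nat.sInf_le h1).trans h2
  · obtain ⟨c, hc, b, hb, δ, hδ, h⟩ := hbad
    exact ⟨c, hc, b, hb, δ, hδ, (hbd c hc b hb δ hδ).trans_lt h⟩
end

section
/- Every MDT-optimal schedule L satisfies T_κ(L) ≤ lcm(B)·|C| − 1 for all configurations κ ∈ K_BC, i.e., its worst-case discovery time is at most lcm(B)·|C| time slots. -/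
open scoped Classical

/-- every MDT-optimal schedule has all discovery times at most
`lcm(B)·|C| − 1`. -/
theorem stmt16 (C B : Finset ℕ) (hC : C.Nonempty) (hB : B.Nonempty)
    (hBpos : ∀ b ∈ B, 0 < b)
    (L : Set (ℕ × ℕ)) (hL : IsSchedule C L) (hcomp : Complete C B L)
    (hopt : ∀ L' : Set (ℕ × ℕ), IsSchedule C L' → Complete C B L' →
      MDT C B L ≤ MDT C B L') :
    ∀ c ∈ C, ∀ b ∈ B, ∀ δ < b, discTime L c b δ ≤ B.lcm id * C.card - 1 := by
  intro c hc b hb δ hδ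
  by_contra hlt
  push Not at hlt
  set M := B.lcm id with hM
  have hMpos : 0 < M := by
    apply Nat.pos_of_ne_zero
    intro h0
    rw [hM, Finset.lcm_eq_zero_iff] at h0
    obtain ⟨x, hx, hx0⟩ := h0
    have := hBpos x hx
    simp only [id] at hx0
    omega
  have hdvd : ∀ b ∈ B, b ∣ M := fun b hb => Finset.dvd_lcm (f := id) hb
  have hspec : ∀ c ∈ C, ∀ b ∈ B, ∀ δ < b, DiscoveredAt L c b δ (discTime L c b δ) :=
    fun c hc b hb δ hδ => Nat.sInf_mem (hcomp c hc b hb δ hδ)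
  have hmin : ∀ c b δ t, DiscoveredAt L c b δ t → discTime L c b δ ≤ t :=
    fun c b δ t h => Nat.sInf_le h
  have hT := hspec c hc b hb δ hδ
  set t := discTime L c b δ with ht
  have hcard : 0 < C.card := hC.card_pos
  have hge : M * C.card ≤ t := by omega
  have hmod : ∀ i, (t % M + i * M) % M = t % M := by
    intro i; simp
  have hlt' : ∀ i, i < C.card → t % M + i * M < t := by
    intro i hi
    have h1 : t % M < M := Nat.mod_lt _ hMpos
    have h2 : (i + 1) * M ≤ C.card * M := Nat.mul_le_mul_right _ hi
    nlinarith
  have hmodb : ∀ x y, x % M = y % M → ∀ b ∈ B, x % b = y % b := by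
    intro x y h b hb
    exact Nat.ModEq.of_dvd (hdvd b hb) h
  have hcn : ∀ s, s < t → s % M = t % M → (c, s) ∉ L := by
    intro s hs hsm hmem
    have := hmin c b δ s ⟨hmem, (hmodb s t hsm b hb).trans hT.2⟩
    omega
  obtain ⟨s, hst, hsm, hs⟩ : ∃ s, s < t ∧ s % M = t % M ∧
      ∀ c', (c', s) ∈ L → ∃ s', s' < s ∧ s' % M = s % M ∧ (c', s') ∈ L := by
    by_contra hno
    push Not at hno
    have hch : ∀ i, ∃ c', i < C.card → (c', t % M + i * M) ∈ L ∧
        ∀ s', s' < t % M + i * M → s' % M = (t % M + i * M) % M → (c', s') ∉ L := by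
      intro i
      by_cases hi : i < C.card
      · obtain ⟨c', h⟩ := hno _ (hlt' i hi) (hmod i)
        exact ⟨c', fun _ => h⟩
      · exact ⟨0, fun h => absurd h hi⟩
    choose f hf using hch
    have key : ∀ i j, i < j → j < C.card → f i ≠ f j := by
      intro i j hij hj he
      have h1 := (hf i (by omega)).1
      rw [he] at h1
      refine (hf j hj).2 _ ?_ ?_ h1
      · have := Nat.mul_lt_mul_of_pos_right hij hMpos
        omega
      · rw [hmod, hmod]
    obtain ⟨i, hi, j, hj, hij, he⟩ := Finset.exists_ne_map_eq_of_card_lt_of_maps_to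
      (s := Finset.range C.card) (t := C.erase c) (f := f)
      (by rw [Finset.card_erase_of_mem hc, Finset.card_range]; omega)
      (by
        intro i hi
        have hi' : i < C.card := by simpa using hi
        have h1 := (hf i hi').1
        have h3 : f i ∈ C := hL.1 _ h1
        have h4 : f i ≠ c := by
          intro h
          rw [h] at h1
          exact hcn _ (hlt' i hi') (hmod i) h1
        simpa using And.intro h3 h4)
    rw [Finset.mem_range] at hi hj
    rcases lt_or_gt_of_ne hij with h | h
    · exact key i j h hj he
    · exact key j i h hi he.symm
  let L' : Set (ℕ × ℕ) := {p | (p.2 ≠ s ∧ p ∈ L) ∨ p = (c, s)}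
  have hL' : IsSchedule C L' := by
    refine ⟨?_, ?_⟩
    · rintro p (⟨_, h⟩ | rfl)
      · exact hL.1 p h
      · exact hc
    · rintro c1 c2 u (⟨h1, h2⟩ | h) (⟨h3, h4⟩ | h')
      · exact hL.2 _ _ _ h2 h4
      · simp only [Prod.mk.injEq] at h'
        exact absurd h'.2 h1
      · simp only [Prod.mk.injEq] at h
        exact absurd h.2 h3
      · simp only [Prod.mk.injEq] at h h'
        rw [h.1, h'.1]
  have hdisc : ∀ c ∈ C, ∀ b ∈ B, ∀ δ < b, DiscoveredAt L' c b δ (discTime L c b δ) := by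
    intro c1 hc1 b1 hb1 δ1 hδ1
    have h := hspec c1 hc1 b1 hb1 δ1 hδ1
    refine ⟨Or.inl ⟨?_, h.1⟩, h.2⟩
    intro he
    simp only at he
    rw [he] at h
    obtain ⟨s', h1, h2, h3⟩ := hs c1 h.1
    have := hmin c1 b1 δ1 s' ⟨h3, (hmodb s' s h2 b1 hb1).trans h.2⟩
    omega
  have hle : ∀ c ∈ C, ∀ b ∈ B, ∀ δ < b, discTime L' c b δ ≤ discTime L c b δ :=
    fun c hc b hb δ hδ => Nat.sInf_le (hdisc c hc b hb δ hδ)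
  have hstrict : discTime L' c b δ < discTime L c b δ := by
    have : discTime L' c b δ ≤ s :=
      Nat.sInf_le ⟨Or.inr rfl, (hmodb s t hsm b hb).trans hT.2⟩
    omega
  have hw : ∀ b ∈ B, 0 < weight C B b := by
    intro b hb
    have h1 := hBpos b hb
    have h2 : 0 < B.card := hB.card_pos
    unfold weight
    positivity
  have hfin : MDT C B L' < MDT C B L := by
    unfold MDT
    apply Finset.sum_lt_sum
    · rintro ⟨c1, b1, δ1⟩ hk
      simp only [KBC, Finset.mem_filter, Finset.mem_product] at hk
      obtain ⟨⟨h1, h2, _⟩, h3⟩ := hk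
      exact mul_le_mul_of_nonneg_left (by exact_mod_cast hle c1 h1 b1 h2 δ1 h3) (hw b1 h2).le
    · refine ⟨(c, b, δ), ?_, ?_⟩
      · simp only [KBC, Finset.mem_filter, Finset.mem_product, Finset.mem_range]
        have : b ≤ B.sup id := Finset.le_sup (f := id) hb
        exact ⟨⟨hc, hb, by omega⟩, hδ⟩
      · exact mul_lt_mul_of_pos_left (by exact_mod_cast hstrict) (hw b hb)
  have := hopt L' hL' (fun c hc b hb δ hδ => ⟨_, hdisc c hc b hb δ hδ⟩)
  linarith
end

section
/- If B ∈ 𝔽₂, then every MDT-optimal schedule is WDT-optimal, i.e., every configuration has discovery time at most max(B)·|C| − 1. -/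
open scoped Classical

/-- for `B ∈ 𝔽₂`, every MDT-optimal schedule is WDT-optimal:
all discovery times are at most `max(B)·|C| − 1`. -/
theorem stmt17 (C B : Finset ℕ) (hC : C.Nonempty) (hB : B.Nonempty)
    (hBpos : ∀ b ∈ B, 0 < b)
    (hF2 : ∀ b ∈ B, b ∣ B.max' hB)
    (L : Set (ℕ × ℕ)) (hL : IsSchedule C L) (hcomp : Complete C B L)
    (hopt : ∀ L' : Set (ℕ × ℕ), IsSchedule C L' → Complete C B L' →
      MDT C B L ≤ MDT C B L') :
    ∀ c ∈ C, ∀ b ∈ B, ∀ δ < b, discTime L c b δ ≤ B.max' hB * C.card - 1 := by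
  by_contra hcon
  push Not at hcon
  obtain ⟨c, hc, b, hb, δ, hδ, hT⟩ := hcon
  set M := B.max' hB with hM
  have hMB : M ∈ B := Finset.max'_mem B hB
  have hMpos : 0 < M := hBpos M hMB
  have hn : 0 < C.card := Finset.card_pos.mpr hC
  have hmem : ∀ c ∈ C, ∀ b ∈ B, ∀ δ < b, DiscoveredAt L c b δ (discTime L c b δ) :=
    fun c hc b hb δ hδ => Nat.sInf_mem (hcomp c hc b hb δ hδ)
  have hmin : ∀ c b δ t, DiscoveredAt L c b δ t → discTime L c b δ ≤ t :=
    fun c b δ t h => Nat.sInf_le h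
  have hTm := hmem c hc b hb δ hδ
  set T := discTime L c b δ with hTdef
  have hTge : M * C.card ≤ T := by omega
  have hmodb : ∀ b ∈ B, ∀ s t : ℕ, s % M = t % M → s % b = t % b := by
    intro b hb s t h
    exact Nat.ModEq.of_dvd (hF2 b hb) h
  -- find a useless slot
  have key : ∃ s' < T, s' % M = T % M ∧
      ∀ x, (x, s') ∈ L → ∃ s < s', s % M = s' % M ∧ (x, s) ∈ L := by
    by_contra hno
    push Not at hno
    have hlt : ∀ j < C.card, T % M + j * M < T := by
      intro j hj
      have h1 : T % M < M := Nat.mod_lt _ hMpos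
      have h2 : (j + 1) * M ≤ C.card * M := Nat.mul_le_mul_right M hj
      nlinarith
    have hmod : ∀ j, (T % M + j * M) % M = T % M := by
      intro j; simp
    have hex : ∀ j, ∃ x, j < C.card → (x, T % M + j * M) ∈ L ∧
        ∀ s < T % M + j * M, s % M = (T % M + j * M) % M → (x, s) ∉ L := by
      intro j
      by_cases hj : j < C.card
      · obtain ⟨x, hx⟩ := hno _ (hlt j hj) (hmod j)
        exact ⟨x, fun _ => hx⟩
      · exact ⟨0, fun h => absurd h hj⟩
    choose f hf using hex
    have hcard : (C.erase c).card < (Finset.range C.card).card := by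
      rw [Finset.card_erase_of_mem hc, Finset.card_range]; omega
    have hmaps : ∀ j ∈ Finset.range C.card, f j ∈ C.erase c := by
      intro j hj
      have hj := Finset.mem_range.mp hj
      have h1 := (hf j hj).1
      refine Finset.mem_erase.mpr ⟨?_, hL.1 _ h1⟩
      intro he
      rw [he] at h1
      have h2 := hmin c b δ _ ⟨h1, (hmodb b hb _ _ (hmod j)).trans hTm.2⟩
      have h3 := hlt j hj
      omega
    obtain ⟨i, hi, j, hj, hij, hfe⟩ :=
      Finset.exists_ne_map_eq_of_card_lt_of_maps_to hcard hmaps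
    have hi := Finset.mem_range.mp hi
    have hj := Finset.mem_range.mp hj
    have aux : ∀ i j, i < C.card → j < C.card → i < j → f i = f j → False := by
      intro i j hi hj hij hfe
      refine (hf j hj).2 (T % M + i * M) ?_ ((hmod i).trans (hmod j).symm) ?_
      · have := Nat.mul_lt_mul_of_pos_right hij hMpos
        omega
      · rw [← hfe]; exact (hf i hi).1
    rcases lt_or_gt_of_ne hij with h | h
    · exact aux i j hi hj h hfe
    · exact aux j i hj hi h hfe.symm
  obtain ⟨s', hs'T, hs'M, hs'⟩ := key
  let L' : Set (ℕ × ℕ) := {p | (p.2 ≠ s' ∧ p ∈ L) ∨ p = (c, s')}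
  have hsched : IsSchedule C L' := by
    refine ⟨?_, ?_⟩
    · rintro p (⟨_, hp⟩ | rfl)
      · exact hL.1 p hp
      · exact hc
    · rintro x y t (⟨h1, h2⟩ | h1) (⟨h3, h4⟩ | h3)
      · exact hL.2 _ _ _ h2 h4
      · simp_all
      · simp_all
      · simp_all
  have hdisc : ∀ x ∈ C, ∀ d ∈ B, ∀ e < d, DiscoveredAt L' x d e (discTime L x d e) := by
    intro x hx d hd e he
    have h := hmem x hx d hd e he
    refine ⟨Or.inl ⟨?_, h.1⟩, h.2⟩
    intro heq
    have heq : discTime L x d e = s' := heq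
    have h1 := h.1
    rw [heq] at h1
    obtain ⟨s, hs, hsM, hsL⟩ := hs' x h1
    have h2 := hmin x d e s ⟨hsL, by rw [hmodb d hd s s' hsM, ← heq]; exact h.2⟩
    omega
  have hcomp' : Complete C B L' := fun x hx d hd e he => ⟨_, hdisc x hx d hd e he⟩
  have hle := hopt L' hsched hcomp'
  refine absurd hle (not_le.mpr ?_)
  have hw : ∀ d ∈ B, 0 < weight C B d := by
    intro d hd
    have h1 := hBpos d hd
    have h2 : 0 < B.card := Finset.card_pos.mpr hB
    unfold weight
    positivity
  unfold MDT
  refine Finset.sum_lt_sum ?_ ⟨(c, b, δ), ?_, ?_⟩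
  · rintro ⟨x, d, e⟩ hκ
    simp only [KBC, Finset.mem_filter, Finset.mem_product] at hκ
    obtain ⟨⟨hx, hd, _⟩, he⟩ := hκ
    refine mul_le_mul_of_nonneg_left ?_ (hw d hd).le
    exact_mod_cast Nat.sInf_le (hdisc x hx d hd e he)
  · simp only [KBC, Finset.mem_filter, Finset.mem_product, Finset.mem_range]
    have : b ≤ B.sup id := Finset.le_sup (f := id) hb
    exact ⟨⟨hc, hb, by omega⟩, hδ⟩
  · refine mul_lt_mul_of_pos_left ?_ (hw b hb)
    have h1 : discTime L' c b δ ≤ s' :=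
      Nat.sInf_le ⟨Or.inr rfl, (hmodb b hb _ _ hs'M).trans hTm.2⟩
    exact_mod_cast lt_of_le_of_lt h1 hs'T
end

section
/- Every NDoT-optimal schedule is complete and WDT-optimal: if L is NDoT-optimal, then every configuration in K_BC has a discovery time under L and this discovery time is at most max(B)·|C| − 1. -/
open scoped Classical

theorem exists_shift (x b δ : ℕ) (h : δ < b) : ∃ r < b, (x + r) % b = δ := by
  have hb : 0 < b := by omega
  refine ⟨(δ + (b - x % b)) % b, Nat.mod_lt _ hb, ?_⟩
  rw [Nat.add_mod_mod]
  have h1 := Nat.mod_add_div x b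
  have h2 := Nat.mod_lt x hb
  have h3 : x + (δ + (b - x % b)) = δ + b * (x / b + 1) := by
    rw [Nat.mul_add]; omega
  rw [h3, Nat.add_mul_mod_self_left, Nat.mod_eq_of_lt h]

/-- every NDoT-optimal schedule is complete and WDT-optimal. -/
theorem stmt18 (C B : Finset ℕ) (hC : C.Nonempty) (hB : B.Nonempty)
    (hBpos : ∀ b ∈ B, 0 < b)
    (L : Set (ℕ × ℕ)) (hL : IsSchedule C L)
    (hopt : ∀ L' : Set (ℕ × ℕ), IsSchedule C L' →
      ∀ t : ℕ, discSum C B L' t ≤ discSum C B L t) :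
    Complete C B L ∧
      ∀ c ∈ C, ∀ b ∈ B, ∀ δ < b, discTime L c b δ ≤ B.max' hB * C.card - 1 := by
  have key : ∀ c ∈ C, ∀ b ∈ B, ∀ δ < b,
      ∃ t ≤ B.max' hB * C.card - 1, DiscoveredAt L c b δ t := by
    set m := B.max' hB with hm
    have hm0 : 0 < m := hBpos _ (B.max'_mem hB)
    let e := C.equivFin
    let L' : Set (ℕ × ℕ) := {p | ∃ h : p.1 ∈ C, ((e ⟨p.1, h⟩ : Fin C.card) : ℕ) = p.2 / m}
    have hL' : IsSchedule C L' := by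
      refine ⟨fun p hp => hp.1, ?_⟩
      rintro c c' t ⟨h1, h2⟩ ⟨h3, h4⟩
      have h5 := e.injective (Fin.ext (h2.trans h4.symm))
      exact congrArg Subtype.val h5
    have full : ∀ c ∈ C, ∀ b ∈ B, ∀ δ < b, ∃ t ≤ m * C.card - 1, DiscoveredAt L' c b δ t := by
      intro c hc b hb δ hδ
      obtain ⟨r, hr, hr2⟩ := exists_shift (m * (e ⟨c, hc⟩ : Fin C.card)) b δ hδ
      have hbm : b ≤ m := B.le_max' b hb
      have hi := (e ⟨c, hc⟩).2
      refine ⟨_, ?_, ⟨hc, ?_⟩, hr2⟩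
      · have := Nat.mul_le_mul_left m (Nat.succ_le_of_lt hi)
        rw [Nat.mul_succ] at this
        omega
      · show _ = (m * _ + r) / m
        rw [Nat.mul_add_div hm0, Nat.div_eq_of_lt (by omega)]
        rfl
    have hmem : ∀ κ ∈ KBC C B, κ.1 ∈ C ∧ κ.2.1 ∈ B ∧ κ.2.2 < κ.2.1 := by
      intro κ hκ
      simp only [KBC, Finset.mem_filter, Finset.mem_product] at hκ
      exact ⟨hκ.1.1, hκ.1.2.1, hκ.2⟩
    have hle := hopt L' hL' (m * C.card - 1)
    intro c hc b hb δ hδ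
    by_contra hcon
    have hlt : discSum C B L (m * C.card - 1) < discSum C B L' (m * C.card - 1) := by
      unfold discSum
      have hk : (c, b, δ) ∈ KBC C B := by
        simp only [KBC, Finset.mem_filter, Finset.mem_product, Finset.mem_range]
        have : b ≤ B.sup id := Finset.le_sup (f := id) hb
        exact ⟨⟨hc, hb, by omega⟩, hδ⟩
      have hpos : ∀ b ∈ B, 0 < weight C B b := by
        intro b hb
        have h1 := hBpos b hb
        have h2 := hB.card_pos
        have h3 := hC.card_pos
        unfold weight
        positivity
      apply Finset.sum_lt_sum_of_subset (i := (c, b, δ))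
      · intro κ hκ
        rw [Finset.mem_filter] at hκ ⊢
        obtain ⟨h1, h2, h3⟩ := hmem κ hκ.1
        exact ⟨hκ.1, full _ h1 _ h2 _ h3⟩
      · rw [Finset.mem_filter]
        exact ⟨hk, full _ hc _ hb _ hδ⟩
      · rw [Finset.mem_filter]
        exact fun h => hcon h.2
      · exact hpos b hb
      · intro κ hκ _
        exact (hpos _ (hmem κ (Finset.mem_filter.1 hκ).1).2.1).le
    linarith
  refine ⟨fun c hc b hb δ hδ => ?_, fun c hc b hb δ hδ => ?_⟩
  · obtain ⟨t, _, h⟩ := key c hc b hb δ hδ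
    exact ⟨t, h⟩
  · obtain ⟨t, ht, h⟩ := key c hc b hb δ hδ
    exact (Nat.sInf_le h).trans ht
end

section
/- If there exists an NDoT-optimal schedule (for the given B and C), then every MDT-optimal schedule is NDoT-optimal. -/
open scoped Classical

lemma aux_pos (C B : Finset ℕ) (hBpos : ∀ b ∈ B, 0 < b) (κ : ℕ × ℕ × ℕ) (hκ : κ ∈ KBC C B) :
    0 < weight C B κ.2.1 := by
  simp only [KBC, Finset.mem_filter, Finset.mem_product] at hκ
  obtain ⟨⟨h1, h2, h3⟩, h4⟩ := hκ
  have hb := hBpos _ h2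
  have hBc : 0 < B.card := Finset.card_pos.mpr ⟨_, h2⟩
  have hCc : 0 < C.card := Finset.card_pos.mpr ⟨_, h1⟩
  unfold weight
  positivity

lemma aux_mem (C B : Finset ℕ) (c b δ : ℕ) (hc : c ∈ C) (hb : b ∈ B) (hδ : δ < b) :
    (c, b, δ) ∈ KBC C B := by
  simp only [KBC, Finset.mem_filter, Finset.mem_product, Finset.mem_range]
  exact ⟨⟨hc, hb, lt_of_lt_of_le hδ (Finset.le_sup (f := id) hb)⟩, hδ⟩

lemma aux_iff (L : Set (ℕ × ℕ)) (c b δ t : ℕ) (h : ∃ t, DiscoveredAt L c b δ t) :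
    (∃ t' ≤ t, DiscoveredAt L c b δ t') ↔ discTime L c b δ ≤ t := by
  constructor
  · rintro ⟨t', h1, h2⟩
    exact le_trans (Nat.sInf_le h2) h1
  · intro h1
    exact ⟨_, h1, Nat.sInf_mem (s := {t | DiscoveredAt L c b δ t}) h⟩

lemma aux_count (w : ℝ) (T N : ℕ) (h : T ≤ N) :
    w * (T : ℝ) + ∑ t ∈ Finset.range N, (if T ≤ t then w else 0) = N * w := by
  induction N, h using Nat.le_induction with
  | base =>
    rw [Finset.sum_eq_zero]
    · ring
    · intro t ht
      rw [if_neg]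
      simpa using ht
  | succ n hn ih =>
    rw [Finset.sum_range_succ, if_pos hn, ← add_assoc, ih]
    push_cast
    ring

lemma aux_disc (C B : Finset ℕ) (L : Set (ℕ × ℕ)) (hcomp : Complete C B L) (t : ℕ) :
    discSum C B L t = ∑ κ ∈ KBC C B,
      if discTime L κ.1 κ.2.1 κ.2.2 ≤ t then weight C B κ.2.1 else 0 := by
  unfold discSum
  rw [Finset.sum_filter]
  refine Finset.sum_congr rfl fun κ hκ => ?_
  simp only [KBC, Finset.mem_filter, Finset.mem_product] at hκ
  obtain ⟨⟨h1, h2, h3⟩, h4⟩ := hκ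
  simp only [aux_iff L κ.1 κ.2.1 κ.2.2 t (hcomp _ h1 _ h2 _ h4)]

lemma aux_mdt (C B : Finset ℕ) (L : Set (ℕ × ℕ)) (hcomp : Complete C B L) :
    ∃ N0 : ℕ, ∀ N ≥ N0, MDT C B L + ∑ t ∈ Finset.range N, discSum C B L t
      = N * ∑ κ ∈ KBC C B, weight C B κ.2.1 := by
  refine ⟨(KBC C B).sup fun κ => discTime L κ.1 κ.2.1 κ.2.2, fun N hN => ?_⟩
  simp only [aux_disc C B L hcomp]
  rw [Finset.sum_comm, MDT, ← Finset.sum_add_distrib, Finset.mul_sum]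
  refine Finset.sum_congr rfl fun κ hκ => aux_count _ _ _ (le_trans ?_ hN)
  exact Finset.le_sup (f := fun κ : ℕ × ℕ × ℕ => discTime L κ.1 κ.2.1 κ.2.2) hκ

lemma aux_total (C B : Finset ℕ) (L : Set (ℕ × ℕ)) (hcomp : Complete C B L) :
    ∃ t : ℕ, discSum C B L t = ∑ κ ∈ KBC C B, weight C B κ.2.1 := by
  refine ⟨(KBC C B).sup fun κ => discTime L κ.1 κ.2.1 κ.2.2, ?_⟩
  rw [aux_disc C B L hcomp]
  refine Finset.sum_congr rfl fun κ hκ => if_pos ?_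
  exact Finset.le_sup (f := fun κ : ℕ × ℕ × ℕ => discTime L κ.1 κ.2.1 κ.2.2) hκ

lemma aux_complete (C B : Finset ℕ) (hBpos : ∀ b ∈ B, 0 < b) (L : Set (ℕ × ℕ)) (t : ℕ)
    (h : ∑ κ ∈ KBC C B, weight C B κ.2.1 ≤ discSum C B L t) : Complete C B L := by
  intro c hc b hb δ hδ
  by_contra hne
  have hm := aux_mem C B c b δ hc hb hδ
  refine absurd h (not_le.mpr ?_)
  unfold discSum
  refine Finset.sum_lt_sum_of_subset (Finset.filter_subset _ _) hm ?_ (aux_pos C B hBpos _ hm)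
    fun κ hκ _ => (aux_pos C B hBpos κ hκ).le
  simp only [Finset.mem_filter, not_and]
  rintro _ ⟨t', _, h2⟩
  exact hne ⟨t', h2⟩

/-- if an NDoT-optimal schedule exists, then every MDT-optimal schedule
is NDoT-optimal. -/
theorem stmt19 (C B : Finset ℕ) (hC : C.Nonempty) (hB : B.Nonempty)
    (hBpos : ∀ b ∈ B, 0 < b)
    (hex : ∃ Lstar : Set (ℕ × ℕ), IsSchedule C Lstar ∧
      ∀ L' : Set (ℕ × ℕ), IsSchedule C L' →
        ∀ t : ℕ, discSum C B L' t ≤ discSum C B Lstar t)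
    (L : Set (ℕ × ℕ)) (hL : IsSchedule C L) (hcomp : Complete C B L)
    (hmdt : ∀ L' : Set (ℕ × ℕ), IsSchedule C L' → Complete C B L' →
      MDT C B L ≤ MDT C B L') :
    ∀ L' : Set (ℕ × ℕ), IsSchedule C L' →
      ∀ t : ℕ, discSum C B L' t ≤ discSum C B L t := by
  obtain ⟨S, hS, hopt⟩ := hex
  obtain ⟨t0, ht0⟩ := aux_total C B L hcomp
  have hSc : Complete C B S := aux_complete C B hBpos S t0 (ht0 ▸ hopt L hL t0)
  obtain ⟨N1, h1⟩ := aux_mdt C B L hcomp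
  obtain ⟨N2, h2⟩ := aux_mdt C B S hSc
  have hle := hmdt S hS hSc
  intro L' hL' t
  refine le_trans (hopt L' hL' t) ?_
  by_contra hlt
  push Not at hlt
  have e1 := h1 (max (max N1 N2) (t + 1)) (by simp)
  have e2 := h2 (max (max N1 N2) (t + 1)) (by simp)
  have : ∑ s ∈ Finset.range (max (max N1 N2) (t + 1)), discSum C B L s
      < ∑ s ∈ Finset.range (max (max N1 N2) (t + 1)), discSum C B S s :=
    Finset.sum_lt_sum (fun s _ => hopt L hL s) ⟨t, by simp, hlt⟩
  linarith
end
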